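/- (1) For all 1 ≤ i ≠ j ≤ n: Y_i·e_{ij}·(T^{−1})^-_{i−1,1}·(T^{−1})^+_{1,i−1}·Y_i^{−1} = q·T^+_{i,n−1}·T^-_{n−1,i}·e_{ij} + (q−q^{−1})^{−1}(τ−τ^{−1})·C_1, where C_1 = q·T^+_{i,n−1}·(T^{−1})^-_{j−2,i}·(Y_n − Y_n^{−1})·T^-_{n−1,j} if j > i, and C_1 = T^+_{i,n−1}·(T^{−1})^-_{j−1,1}·(T^{−1})^+_{1,n−2}·Y_{n−1}^{−1}·(Y_n² − 1)·T^-_{n−1,j}·(T^{−1})^-_{n−1,i} if i > j. (2) For all 1 ≤ i ≠ j ≤ n: Y_i·T^-_{i−1,1}·T^+_{1,i−1}·e_{ji}·Y_i^{−1} = q^{−1}·e_{ji}·(T^{−1})^+_{i,n−1}·(T^{−1})^-_{n−1,i} + (q−q^{−1})^{−1}(τ^{−1}−τ)·C_2, where C_2 = q^{−1}·(T^{−1})^+_{j,n−1}·(Y_n − Y_n^{−1})·T^+_{i,j−2}·(T^{−1})^-_{n−1,i} if j > i, and C_2 = T^+_{i,n−1}·(T^{−1})^+_{j,n−1}·Y_{n−1}·(1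 − Y_n^{−2})·T^-_{n−2,1}·T^+_{1,j−1}·(T^{−1})^-_{n−1,i} if i > j. (3) For all pairwise distinct i, j, k ∈ {1,…,n}: Y_i·ℛ^+_{ij}·e_{jk}·ℛ^-_{ik}·Y_i^{−1} = (ℛ^{−1})^+_{ki}·e_{jk}·(ℛ^{−1})^-_{ji}. -/

import Mathlib

noncomputable section

/-- The Laurent polynomial ring `R[X₁^{±1}, …, Xₙ^{±1}]` in `n` variables over `R`,
realised as the monoid algebra of the additive monoid `Fin n →₀ ℤ` of exponent vectors. -/
abbrev Laur (R : Type*) [CommRing R] (n : ℕ) : Type _ :=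
  AddMonoidAlgebra R (Fin n →₀ ℤ)

variable {R : Type*} [CommRing R] {n : ℕ}

/-- The monomial `c · X^a`. -/
def mono (a : Fin n →₀ ℤ) (c : R) : Laur R n := AddMonoidAlgebra.single a c

/-- The generator `X_i`. -/
def Xel (i : Fin n) : Laur R n := mono (Finsupp.single i 1) 1

/-- The element `X_i⁻¹`. -/
def XinvEl (i : Fin n) : Laur R n := mono (Finsupp.single i (-1)) 1

/-- Multiplication by a Laurent polynomial, as a linear endomorphism. -/
def mulOp (x : Laur R n) : Module.End R (Laur R n) := LinearMap.mulLeft R x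

/-- The operator of multiplication by `X_i`, with `ℕ`-indexing (`0`-based; junk value `1`
out of range). -/
def XOp (i : ℕ) : Module.End R (Laur R n) :=
  if h : i < n then mulOp (Xel ⟨i, h⟩) else 1

/-- The operator of multiplication by `X_i⁻¹`, with `ℕ`-indexing. -/
def XinvOp (i : ℕ) : Module.End R (Laur R n) :=
  if h : i < n then mulOp (XinvEl ⟨i, h⟩) else 1

/-- Ascending product `f s * f (s+1) * ⋯ * f (s+len-1)` (equal to `1` when `len = 0`). -/
def aF {M : Type*} [Monoid M] (f : ℕ → M) (s len : ℕ) : M :=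
  ((List.range' s len).map f).prod

/-- Descending product `f (s+len-1) * ⋯ * f (s+1) * f s` (equal to `1` when `len = 0`). -/
def dF {M : Type*} [Monoid M] (f : ℕ → M) (s len : ℕ) : M :=
  (((List.range' s len).map f).reverse).prod

/-- Integer power `u^z`, where `v` is a designated (two-sided) inverse of `u`. -/
def zpowOp {M : Type*} [Monoid M] (u v : M) (z : ℤ) : M :=
  if 0 ≤ z then u ^ z.toNat else v ^ (-z).toNat

/-- The element `(ℛ^ε)^{±}_{ij}` of the paper: for `0`-based indices, when `j < i` this is
`f_{j+1}` descending-product, then `mid`, then `g_{j+1}` ascending-product; `1` for `i ≤ j`.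
Taking `f = T, g = Ti, mid = (T j)^2` gives `ℛ⁺`;  `f = T, g = Ti, mid = (Ti j)^2` gives `ℛ⁻`;
`f = Ti, g = T, mid = (T j)^2` gives `(ℛ⁻¹)⁺`;  `f = Ti, g = T, mid = (Ti j)^2` gives `(ℛ⁻¹)⁻`. -/
def Rgen {M : Type*} [Monoid M] (f g : ℕ → M) (mid : M) (i j : ℕ) : M :=
  if j < i then dF f (j + 1) (i - j - 1) * mid * aF g (j + 1) (i - j - 1) else 1

section GroupPart

variable {G : Type*} [Group G]

theorem aF_zero' {M : Type*} [Monoid M] (f : ℕ → M) (s : ℕ) : aF f s 0 = 1 := by simp [aF]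
theorem dF_zero' {M : Type*} [Monoid M] (f : ℕ → M) (s : ℕ) : dF f s 0 = 1 := by simp [dF]
theorem aF_add' {M : Type*} [Monoid M] (f : ℕ → M) (s a b : ℕ) :
    aF f s (a + b) = aF f s a * aF f (s + a) b := by
  unfold aF
  rw [← List.range'_append_1, List.map_append, List.prod_append]
theorem dF_add' {M : Type*} [Monoid M] (f : ℕ → M) (s a b : ℕ) :
    dF f s (a + b) = dF f (s + a) b * dF f s a := by
  unfold dF
  rw [← List.range'_append_1, List.map_append, List.reverse_append, List.prod_append]
theorem aF_one' {M : Type*} [Monoid M] (f : ℕ → M) (s : ℕ) : aF f s 1 = f s := by simp [aF]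
theorem dF_one' {M : Type*} [Monoid M] (f : ℕ → M) (s : ℕ) : dF f s 1 = f s := by simp [dF]

/-- `T_i ⋯ T_{j-1}` -/
def Up (T : ℕ → G) (i j : ℕ) : G := aF T i (j - i)
/-- `T_{j-1} ⋯ T_i` -/
def Dn (T : ℕ → G) (i j : ℕ) : G := dF T i (j - i)

variable (T : ℕ → G)

theorem Up_self (i : ℕ) : Up T i i = 1 := by simp [Up, aF_zero']
theorem Dn_self (i : ℕ) : Dn T i i = 1 := by simp [Dn, dF_zero']
theorem Up_split {i j k : ℕ} (h : i ≤ j) (h' : j ≤ k) : Up T i k = Up T i j * Up T j k := by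
  unfold Up
  rw [show k - i = (j - i) + (k - j) by omega, aF_add', show i + (j - i) = j by omega]
theorem Dn_split {i j k : ℕ} (h : i ≤ j) (h' : j ≤ k) : Dn T i k = Dn T j k * Dn T i j := by
  unfold Dn
  rw [show k - i = (j - i) + (k - j) by omega, dF_add', show i + (j - i) = j by omega]
theorem Up_one (i : ℕ) : Up T i (i + 1) = T i := by simp [Up, aF_one']
theorem Dn_one (i : ℕ) : Dn T i (i + 1) = T i := by simp [Dn, dF_one']
theorem Up_right {i j : ℕ} (h : i ≤ j) : Up T i (j + 1) = Up T i j * T j := by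
  rw [Up_split T h (Nat.le_succ j), Up_one]
theorem Dn_right {i j : ℕ} (h : i ≤ j) : Dn T i (j + 1) = T j * Dn T i j := by
  rw [Dn_split T h (Nat.le_succ j), Dn_one]
theorem Up_left {i j : ℕ} (h : i < j) : Up T i j = T i * Up T (i + 1) j := by
  rw [Up_split T (Nat.le_succ i) h, Up_one]
theorem Dn_left {i j : ℕ} (h : i < j) : Dn T i j = Dn T (i + 1) j * T i := by
  rw [Dn_split T (Nat.le_succ i) h, Dn_one]

theorem Up_comm (g : G) (i j : ℕ) (h : ∀ l, i ≤ l → l < j → Commute g (T l)) :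
    Commute g (Up T i j) := by
  rcases le_or_gt i j with hij | hij
  · induction j, hij using Nat.le_induction with
    | base => rw [Up_self]; exact Commute.one_right g
    | succ j hj ih =>
      rw [Up_right T hj]
      exact (ih fun l h1 h2 => h l h1 (by omega)).mul_right (h j hj (by omega))
  · rw [Up, Nat.sub_eq_zero_of_le hij.le, aF_zero']; exact Commute.one_right g
theorem Dn_comm (g : G) (i j : ℕ) (h : ∀ l, i ≤ l → l < j → Commute g (T l)) :
    Commute g (Dn T i j) := by
  rcases le_or_gt i j with hij | hij
  · induction j, hij using Nat.le_induction with
    | base => rw [Dn_self]; exact Commute.one_right g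
    | succ j hj ih =>
      rw [Dn_right T hj]
      exact (h j hj (by omega)).mul_right (ih fun l h1 h2 => h l h1 (by omega))
  · rw [Dn, Nat.sub_eq_zero_of_le hij.le, dF_zero']; exact Commute.one_right g

/-- The group-level relations of the double affine Hecke algebra (`n = m + 1`). -/
structure DG (m : ℕ) (T X : ℕ → G) (P Q : G) : Prop where
  far : ∀ k l, k + 2 ≤ l → l < m → Commute (T k) (T l)
  braid : ∀ k, k + 1 < m → T k * T (k + 1) * T k = T (k + 1) * T k * T (k + 1)
  XX : ∀ k l, k ≤ m → l ≤ m → Commute (X k) (X l)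
  TX : ∀ k l, k < m → l ≤ m → l ≠ k → l ≠ k + 1 → Commute (T k) (X l)
  TXT : ∀ k, k < m → T k * X k * T k = X (k + 1)
  PX : ∀ k, k < m → P * X (k + 1) = X k * P
  PX0 : P * X 0 = Q * X m * P
  PT : ∀ k, k + 1 < m → P * T (k + 1) = T k * P
  PPT : 0 < m → P * P * T 0 = T (m - 1) * P * P
  Qc : ∀ g, Commute Q g

namespace DG
variable {T} {m : ℕ} {X : ℕ → G} {P Q : G} (H : DG m T X P Q)


theorem farc (H : DG m T X P Q) {k l : ℕ} (hk : k < m) (hl : l < m) (h : k + 2 ≤ l ∨ l + 2 ≤ k) :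
    Commute (T k) (T l) := by
  rcases h with h | h
  · exact H.far k l h hl
  · exact (H.far l k h hk).symm

theorem VXU (H : DG m T X P Q) {i j : ℕ} (h : i ≤ j) (hj : j ≤ m) :
    Dn T i j * X i * Up T i j = X j := by
  induction j, h using Nat.le_induction with
  | base => simp [Up_self, Dn_self]
  | succ j hij ih =>
    rw [Up_right T hij, Dn_right T hij, ← H.TXT j (by omega), ← ih (by omega)]
    group

theorem PU (H : DG m T X P Q) {i j : ℕ} (h : i ≤ j) (hj : j < m) :
    P * Up T (i + 1) (j + 1) = Up T i j * P := by
  induction j, h using Nat.le_induction with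
  | base => simp [Up_self]
  | succ j hij ih =>
    rw [Up_right T (i := i + 1) (j := j + 1) (by omega), ← mul_assoc, ih (by omega), mul_assoc, H.PT j hj,
      Up_right T hij, mul_assoc]

theorem PV (H : DG m T X P Q) {i j : ℕ} (h : i ≤ j) (hj : j < m) :
    P * Dn T (i + 1) (j + 1) = Dn T i j * P := by
  induction j, h using Nat.le_induction with
  | base => simp [Dn_self]
  | succ j hij ih =>
    rw [Dn_right T (i := i + 1) (j := j + 1) (by omega), ← mul_assoc, H.PT j hj, mul_assoc, ih (by omega),
      Dn_right T hij, mul_assoc]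

theorem UT (H : DG m T X P Q) {i j l : ℕ} (hi : i ≤ l) (hl : l + 1 < j) (hj : j ≤ m) :
    Up T i j * T l = T (l + 1) * Up T i j := by
  have h1 : Commute (T l) (Up T (l + 2) j) :=
    Up_comm T _ _ _ fun k h1 h2 => H.farc (by omega) (by omega) (by omega)
  have h2 : Commute (T (l + 1)) (Up T i l) :=
    Up_comm T _ _ _ fun k h1 h2 => H.farc (by omega) (by omega) (by omega)
  have e : Up T i j = Up T i l * (T l * (T (l + 1) * Up T (l + 2) j)) := by
    rw [Up_split T hi (show l ≤ j by omega), Up_left T (show l < j by omega),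
      Up_left T (show l + 1 < j by omega)]
  rw [e]
  calc _ = Up T i l * (T l * T (l + 1)) * (Up T (l + 2) j * T l) := by group
    _ = Up T i l * (T l * T (l + 1) * T l) * Up T (l + 2) j := by rw [← h1.eq]; group
    _ = (Up T i l * T (l + 1)) * (T l * T (l + 1)) * Up T (l + 2) j := by
        rw [H.braid l (by omega)]; group
    _ = _ := by rw [← h2.eq]; group

theorem VT (H : DG m T X P Q) {i j l : ℕ} (hi : i ≤ l) (hl : l + 1 < j) (hj : j ≤ m) :
    Dn T i j * T (l + 1) = T l * Dn T i j := by
  have h1 : Commute (T l) (Dn T (l + 2) j) :=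
    Dn_comm T _ _ _ fun k h1 h2 => H.farc (by omega) (by omega) (by omega)
  have h2 : Commute (T (l + 1)) (Dn T i l) :=
    Dn_comm T _ _ _ fun k h1 h2 => H.farc (by omega) (by omega) (by omega)
  have e : Dn T i j = Dn T (l + 2) j * T (l + 1) * T l * Dn T i l := by
    rw [Dn_split T hi (show l ≤ j by omega), Dn_left T (show l < j by omega),
      Dn_left T (show l + 1 < j by omega)]
  rw [e]
  calc _ = Dn T (l + 2) j * (T (l + 1) * T l) * (Dn T i l * T (l + 1)) := by group
    _ = Dn T (l + 2) j * (T (l + 1) * T l * T (l + 1)) * Dn T i l := by rw [← h2.eq]; group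
    _ = (Dn T (l + 2) j * T l) * (T (l + 1) * T l) * Dn T i l := by
        rw [← H.braid l (by omega)]; group
    _ = _ := by rw [← h1.eq]; group

/-- group-level `Y_i` -/
def Yg (T : ℕ → G) (P : G) (m i : ℕ) : G := Up T i m * P * (Dn T 0 i)⁻¹

theorem YT (H : DG m T X P Q) {i l : ℕ} (hi : i ≤ m) (hl : l < m) (h : i + 1 ≤ l ∨ l + 2 ≤ i) :
    Commute (Yg T P m i) (T l) := by
  rcases h with h | h
  · have h1 : Commute (T l) (Dn T 0 i)⁻¹ :=
      (Dn_comm T _ _ _ fun k h1 h2 => H.farc (by omega) (by omega) (by omega)).inv_right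
    obtain ⟨k, rfl⟩ : ∃ k, l = k + 1 := ⟨l - 1, by omega⟩
    have h2 := H.PT k hl
    have h3 := H.UT (i := i) (l := k) (j := m) (by omega) hl le_rfl
    unfold Yg
    calc _ = Up T i m * P * ((Dn T 0 i)⁻¹ * T (k + 1)) := by group
      _ = Up T i m * (P * T (k + 1)) * (Dn T 0 i)⁻¹ := by rw [← h1.eq]; group
      _ = (Up T i m * T k) * P * (Dn T 0 i)⁻¹ := by rw [h2]; group
      _ = _ := by rw [h3]; group
  · have h1 : Commute (T l) (Up T i m) :=
      (Up_comm T _ _ _ fun k h1 h2 => H.farc (by omega) (by omega) (by omega))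
    have h2 := H.PT l (by omega)
    have h3 := H.VT (i := 0) (l := l) (j := i) (by omega) (by omega) hi
    have h4 : (Dn T 0 i)⁻¹ * T l = T (l + 1) * (Dn T 0 i)⁻¹ := by
      rw [inv_mul_eq_iff_eq_mul, ← mul_assoc, h3]; group
    unfold Yg
    calc _ = Up T i m * P * ((Dn T 0 i)⁻¹ * T l) := by group
      _ = Up T i m * (P * T (l + 1)) * (Dn T 0 i)⁻¹ := by rw [h4]; group
      _ = (Up T i m * T l) * P * (Dn T 0 i)⁻¹ := by rw [h2]; group
      _ = _ := by rw [← h1.eq]; group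

theorem Yrec (i j : ℕ) (h : i ≤ j) (hj : j ≤ m) :
    Yg T P m i = Up T i j * Yg T P m j * Dn T i j := by
  unfold Yg
  rw [Up_split T h hj, Dn_split T (Nat.zero_le i) h]
  group

theorem YY (H : DG m T X P Q) {i : ℕ} (hi : i ≤ m) : Commute (Yg T P m m) (Yg T P m i) := by
  rcases Nat.lt_or_ge i m with h | h
  swap
  · obtain rfl : i = m := by omega
    exact Commute.refl _
  obtain ⟨r, rfl⟩ : ∃ r, m = r + 1 := ⟨m - 1, by omega⟩
  have key : Commute (Yg T P (r + 1) (r + 1)) (Yg T P (r + 1) r) := by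
    have e1 : Yg T P (r + 1) r = T r * Yg T P (r + 1) (r + 1) * T r := by
      rw [Yrec r (r + 1) (by omega) le_rfl, Up_one, Dn_one]
    have e2 : Yg T P (r + 1) (r + 1) * T r = P * (Dn T 0 r)⁻¹ := by
      unfold Yg; rw [Up_self, Dn_right T (Nat.zero_le r)]; group
    have e3 : Yg T P (r + 1) (r + 1) = P * (Dn T 0 r)⁻¹ * (T r)⁻¹ := by rw [← e2]; group
    have e4 : (Dn T 0 r)⁻¹ * P = P * (Dn T 1 (r + 1))⁻¹ := by
      rw [inv_mul_eq_iff_eq_mul, ← mul_assoc, ← H.PV (Nat.zero_le r) (by omega)]; group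
    have e5 : P * P * T 0 = T r * P * P := H.PPT (by omega)
    have e6 : Dn T 0 (r + 1) * Dn T 1 (r + 1) = Dn T 0 r * Dn T 0 (r + 1) := by
      have : ∀ j, j ≤ r → Dn T 0 (r + 1) * Dn T 1 (j + 1) = Dn T 0 j * Dn T 0 (r + 1) := by
        intro j hj
        induction j with
        | zero => simp [Dn_self]
        | succ j ih =>
          rw [Dn_right T (i := 1) (j := j + 1) (by omega), Dn_right T (Nat.zero_le j), ← mul_assoc,
            H.VT (Nat.zero_le j) (by omega) le_rfl, mul_assoc, ih (by omega), mul_assoc]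
      exact this r le_rfl
    have e7 : T r * Dn T 0 r * Dn T 1 (r + 1) = Dn T 0 r * Dn T 1 (r + 1) * T 0 := by
      rw [← Dn_right T (Nat.zero_le r), e6, Dn_left T (Nat.succ_pos r)]; group
    have e8 : T 0 * ((Dn T 1 (r + 1))⁻¹ * (Dn T 0 r)⁻¹) * (T r)⁻¹ =
        (Dn T 1 (r + 1))⁻¹ * (Dn T 0 r)⁻¹ := by
      have : (T r * Dn T 0 r * Dn T 1 (r + 1))⁻¹ = (Dn T 0 r * Dn T 1 (r + 1) * T 0)⁻¹ := by rw [e7]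
      simp only [mul_inv_rev] at this
      rw [mul_assoc, mul_assoc, this]; group
    rw [e1]
    show _ * _ = _ * _
    calc _ = (Yg T P (r + 1) (r + 1) * T r) * (Yg T P (r + 1) (r + 1) * T r) := by group
      _ = P * ((Dn T 0 r)⁻¹ * P) * (Dn T 0 r)⁻¹ := by rw [e2]; group
      _ = P * P * ((Dn T 1 (r + 1))⁻¹ * (Dn T 0 r)⁻¹) := by rw [e4]; group
      _ = (P * P * T 0) * ((Dn T 1 (r + 1))⁻¹ * (Dn T 0 r)⁻¹) * (T r)⁻¹ := by
        conv_lhs => rw [← e8]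
        group
      _ = T r * P * (P * (Dn T 1 (r + 1))⁻¹) * (Dn T 0 r)⁻¹ * (T r)⁻¹ := by rw [e5]; group
      _ = T r * (P * (Dn T 0 r)⁻¹) * (P * (Dn T 0 r)⁻¹ * (T r)⁻¹) := by rw [← e4]; group
      _ = _ := by rw [← e3, ← e2]; group
  rw [Yrec i r (by omega) (by omega)]
  refine (Commute.mul_right ?_ key).mul_right ?_
  · exact Up_comm T _ _ _ fun k h1 h2 => H.YT le_rfl (by omega) (by omega)
  · exact Dn_comm T _ _ _ fun k h1 h2 => H.YT le_rfl (by omega) (by omega)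


/-- group-level `D_k`, one of the two summands -/
def dg (T X : ℕ → G) (m : ℕ) (y : G) (k : ℕ) : G := Up T k m * ((X m)⁻¹ * y) * Dn T k m
/-- `K_i` -/
def Kg (T : ℕ → G) (m i : ℕ) : G := Up T i m * Dn T i m
/-- `J_i` -/
def Jg (T : ℕ → G) (i : ℕ) : G := Dn T 0 i * Up T 0 i
/-- `ℛ⁺_{ij}` for `j < i` -/
def Rg (T : ℕ → G) (i j : ℕ) : G := Dn T (j + 1) i * T j ^ 2 * (Dn T (j + 1) i)⁻¹
/-- `(ℛ⁻¹)⁺_{ki}` for `i < k` -/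
def Ag (T : ℕ → G) (i k : ℕ) : G := (Up T (i + 1) k)⁻¹ * T i ^ 2 * Up T (i + 1) k

/-- admissible `y` (namely `Y_m^{±1}`) -/
structure Good (T : ℕ → G) (P : G) (m : ℕ) (y : G) : Prop where
  t : ∀ l, l + 1 < m → Commute y (T l)
  y : ∀ i, i ≤ m → Commute y (Yg T P m i)

theorem good1 (H : DG m T X P Q) : Good T P m (Yg T P m m) :=
  ⟨fun _ hl => H.YT le_rfl (by omega) (by omega), fun _ hi => H.YY hi⟩
theorem good2 (H : DG m T X P Q) : Good T P m (Yg T P m m)⁻¹ :=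
  ⟨fun l hl => (H.good1.t l hl).inv_left, fun _ hi => (H.YY hi).inv_left⟩

theorem dT (H : DG m T X P Q) {y : G} (hy : Good T P m y) {k l : ℕ} (hl : l < m)
    (h : k + 1 ≤ l ∨ l + 2 ≤ k) (hk : k ≤ m) : Commute (T l) (dg T X m y k) := by
  have hd : ∀ l, l + 1 < m → Commute (T l) ((X m)⁻¹ * y) := fun l hl =>
    (H.TX l m (by omega) le_rfl (by omega) (by omega)).inv_right.mul_right (hy.t l hl).symm
  rcases h with h | h
  · obtain ⟨r, rfl⟩ : ∃ r, l = r + 1 := ⟨l - 1, by omega⟩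
    have h1 := H.UT (i := k) (l := r) (by omega) hl le_rfl
    have h2 := H.VT (i := k) (l := r) (by omega) hl le_rfl
    show _ * _ = _ * _
    unfold dg
    calc _ = (T (r + 1) * Up T k m) * ((X m)⁻¹ * y) * Dn T k m := by group
      _ = Up T k m * (T r * ((X m)⁻¹ * y)) * Dn T k m := by rw [← h1]; group
      _ = Up T k m * ((X m)⁻¹ * y) * (T r * Dn T k m) := by rw [(hd r hl).eq]; group
      _ = _ := by rw [← h2]; group
  · unfold dg
    refine (Commute.mul_right ?_ (hd l (by omega))).mul_right ?_
    · exact Up_comm T _ _ _ fun k h1 h2 => H.farc (by omega) (by omega) (by omega)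
    · exact Dn_comm T _ _ _ fun k h1 h2 => H.farc (by omega) (by omega) (by omega)

theorem UXi (H : DG m T X P Q) {i j : ℕ} (h : i ≤ j) (hj : j ≤ m) :
    Up T i j * (X j)⁻¹ = (X i)⁻¹ * (Dn T i j)⁻¹ := by
  rw [← H.VXU h hj]; group

theorem XU (H : DG m T X P Q) {i j : ℕ} (h : i ≤ j) (hj : j ≤ m) :
    X i * Up T i j = (Dn T i j)⁻¹ * X j := by
  rw [← H.VXU h hj]; group

theorem dX (H : DG m T X P Q) (y : G) {k : ℕ} (hk : k ≤ m) :
    dg T X m y k = (X k)⁻¹ * ((Dn T k m)⁻¹ * y * Dn T k m) := by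
  unfold dg
  rw [← mul_assoc, H.UXi hk le_rfl]; group

theorem drec (y : G) {k : ℕ} (hk : k < m) : dg T X m y k = T k * dg T X m y (k + 1) * T k := by
  unfold dg
  rw [Up_left T hk, Dn_left T hk]; group

theorem YX0 (H : DG m T X P Q) {i : ℕ} (hi : i ≤ m) :
    Yg T P m i * X i = Q * (Kg T m i * X i * Yg T P m i * Jg T i) := by
  have h1 := H.VXU (Nat.zero_le i) hi
  have h2 := H.VXU hi le_rfl
  have h3 := H.PX0
  unfold Yg Kg Jg
  calc _ = Up T i m * P * (Dn T 0 i)⁻¹ * X i := by group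
    _ = Up T i m * (P * X 0) * Up T 0 i := by rw [← h1]; group
    _ = (Up T i m * Q) * X m * P * Up T 0 i := by rw [h3]; group
    _ = _ := by rw [← (H.Qc _).eq, ← h2]; group

theorem Pd (H : DG m T X P Q) {y : G} (hy : Good T P m y) {k : ℕ} (hk : k < m) :
    P * dg T X m y (k + 1) = dg T X m y k * P := by
  obtain ⟨r, rfl⟩ : ∃ r, m = r + 1 := ⟨m - 1, by omega⟩
  have h1 : Dn T 0 (r + 1) * Dn T (k + 1) (r + 1) = Dn T k r * Dn T 0 (r + 1) := by
    have : ∀ j, k ≤ j → j ≤ r →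
        Dn T 0 (r + 1) * Dn T (k + 1) (j + 1) = Dn T k j * Dn T 0 (r + 1) := by
      intro j hkj hj
      induction j, hkj using Nat.le_induction with
      | base => simp [Dn_self]
      | succ j hj' ih =>
        rw [Dn_right T (i := k + 1) (j := j + 1) (by omega), Dn_right T hj', ← mul_assoc,
          H.VT (Nat.zero_le j) (by omega) le_rfl, mul_assoc, ih (by omega), mul_assoc]
    exact this r (by omega) le_rfl
  have hP : P = Yg T P (r + 1) (r + 1) * Dn T 0 (r + 1) := by unfold Yg; rw [Up_self]; group
  have h2 : Commute (Yg T P (r + 1) (r + 1)) (Dn T k r) :=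
    Dn_comm T _ _ _ fun l h1 h2 => H.YT le_rfl (by omega) (by omega)
  have h3 : Dn T k (r + 1) * P * (Dn T (k + 1) (r + 1))⁻¹ = Yg T P (r + 1) r * Dn T 0 r := by
    rw [mul_inv_eq_iff_eq_mul, Yrec r (r + 1) (by omega) le_rfl, Up_one, Dn_one]
    calc _ = T r * (Dn T k r * Yg T P (r + 1) (r + 1)) * Dn T 0 (r + 1) := by
          rw [Dn_right T (show k ≤ r by omega)]; nth_rw 1 [hP]; group
      _ = T r * Yg T P (r + 1) (r + 1) * (Dn T k r * Dn T 0 (r + 1)) := by rw [← h2.eq]; group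
      _ = _ := by rw [← h1, Dn_right T (Nat.zero_le r)]; group
  have h4 : Commute y (Dn T k (r + 1) * P * (Dn T (k + 1) (r + 1))⁻¹) := by
    rw [h3]
    exact (hy.y r (by omega)).mul_right (Dn_comm T _ _ _ fun l h1 h2 => hy.t l (by omega))
  have h5 : P * (X (k + 1))⁻¹ = (X k)⁻¹ * P := by
    rw [eq_inv_mul_iff_mul_eq, ← mul_assoc, ← H.PX k hk]; group
  rw [H.dX y (by omega), H.dX y (by omega)]
  calc _ = (P * (X (k + 1))⁻¹) * ((Dn T (k + 1) (r + 1))⁻¹ * y * Dn T (k + 1) (r + 1)) := by group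
    _ = (X k)⁻¹ * (Dn T k (r + 1))⁻¹ * ((Dn T k (r + 1) * P * (Dn T (k + 1) (r + 1))⁻¹) * y)
        * Dn T (k + 1) (r + 1) := by rw [h5]; group
    _ = _ := by rw [← h4.eq]; group

theorem YJX (H : DG m T X P Q) {i : ℕ} (hi : i ≤ m) :
    Yg T P m i * Jg T i * (X i)⁻¹ = Q⁻¹ * ((X i)⁻¹ * (Kg T m i)⁻¹ * Yg T P m i) := by
  have h := H.YX0 hi
  have h1 := (H.Qc (Kg T m i * X i)).eq
  rw [eq_inv_mul_iff_mul_eq, ← mul_assoc, mul_inv_eq_iff_eq_mul]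
  calc _ = (X i)⁻¹ * (Kg T m i)⁻¹ * ((Kg T m i * X i) * Q) * Yg T P m i * Jg T i := by group
    _ = (X i)⁻¹ * (Kg T m i)⁻¹ * (Q * (Kg T m i * X i * Yg T P m i * Jg T i)) := by
      rw [← h1]; group
    _ = _ := by rw [← h]; group

theorem YJd (H : DG m T X P Q) {y : G} (hy : Good T P m y) {i : ℕ} (hi : i ≤ m) :
    Yg T P m i * Jg T i * dg T X m y i =
      Q⁻¹ * (dg T X m y i * (Kg T m i)⁻¹ * Yg T P m i) := by
  have h := H.YJX hi
  have h1 : (Kg T m i)⁻¹ * Yg T P m i = (Dn T i m)⁻¹ * Yg T P m m * Dn T i m := by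
    rw [Yrec i m hi le_rfl]; unfold Kg; group
  have h2 := (hy.y m le_rfl).eq
  rw [H.dX y hi]
  calc _ = (Yg T P m i * Jg T i * (X i)⁻¹) * ((Dn T i m)⁻¹ * y * Dn T i m) := by group
    _ = Q⁻¹ * (X i)⁻¹ * ((Kg T m i)⁻¹ * Yg T P m i) * ((Dn T i m)⁻¹ * y * Dn T i m) := by
      rw [h]; group
    _ = Q⁻¹ * (X i)⁻¹ * (Dn T i m)⁻¹ * (Yg T P m m * y) * Dn T i m := by rw [h1]; group
    _ = Q⁻¹ * (X i)⁻¹ * ((Dn T i m)⁻¹ * y * Dn T i m) *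
        ((Dn T i m)⁻¹ * Yg T P m m * Dn T i m) := by rw [← h2]; group
    _ = _ := by rw [← h1]; group

theorem A_alt (H : DG m T X P Q) {i k : ℕ} (h : i ≤ k) (hk : k < m) :
    Ag T i (k + 1) = Up T i k * T k ^ 2 * (Up T i k)⁻¹ := by
  induction k, h using Nat.le_induction with
  | base => simp [Ag, Up_self]
  | succ k hik ih =>
    have h0 : Ag T i (k + 1 + 1) = (T (k + 1))⁻¹ * Ag T i (k + 1) * T (k + 1) := by
      unfold Ag; rw [Up_right T (i := i + 1) (j := k + 1) (by omega)]; group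
    have h1 : Commute (T (k + 1)) (Up T i k) :=
      Up_comm T _ _ _ fun l h1 h2 => H.farc (by omega) (by omega) (by omega)
    have h2 := H.braid k hk
    have h3 : (T (k + 1))⁻¹ * T k ^ 2 * T (k + 1) = T k * T (k + 1) ^ 2 * (T k)⁻¹ := by
      rw [eq_mul_inv_iff_mul_eq, mul_assoc, mul_assoc, inv_mul_eq_iff_eq_mul]
      calc _ = T k * (T k * T (k + 1) * T k) := by simp only [pow_two, mul_assoc]
        _ = (T k * T (k + 1) * T k) * T (k + 1) := by
          conv_lhs => rw [h2]
          simp only [mul_assoc]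
        _ = _ := by rw [h2]; simp only [pow_two, mul_assoc]
    rw [h0, ih (by omega), Up_right T hik]
    calc _ = ((T (k + 1))⁻¹ * Up T i k) * T k ^ 2 * ((Up T i k)⁻¹ * T (k + 1)) := by group
      _ = Up T i k * ((T (k + 1))⁻¹ * T k ^ 2 * T (k + 1)) * (Up T i k)⁻¹ := by
        rw [h1.inv_left.eq, ← h1.inv_right.eq]; group
      _ = _ := by rw [h3]; group


theorem VVs (H : DG m T X P Q) {a b k j : ℕ} (ha : a ≤ k) (hk : k ≤ j) (hj : j < b) (hb : b ≤ m) :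
    Dn T a b * Dn T (k + 1) (j + 1) = Dn T k j * Dn T a b := by
  induction j, hk using Nat.le_induction with
  | base => simp [Dn_self]
  | succ j hj' ih =>
    rw [Dn_right T (i := k + 1) (j := j + 1) (by omega), Dn_right T hj', ← mul_assoc,
      H.VT (by omega) (by omega) hb, mul_assoc, ih (by omega), mul_assoc]

theorem VUs (H : DG m T X P Q) {a b k j : ℕ} (ha : a ≤ k) (hk : k ≤ j) (hj : j < b) (hb : b ≤ m) :
    Dn T a b * Up T (k + 1) (j + 1) = Up T k j * Dn T a b := by
  induction j, hk using Nat.le_induction with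
  | base => simp [Up_self]
  | succ j hj' ih =>
    rw [Up_right T (i := k + 1) (j := j + 1) (by omega), Up_right T hj', ← mul_assoc,
      ih (by omega), mul_assoc, H.VT (by omega) (by omega) hb, mul_assoc]

theorem TX1 (H : DG m T X P Q) {k : ℕ} (hk : k < m) : T k * X k = X (k + 1) * (T k)⁻¹ := by
  rw [← H.TXT k hk]; group

theorem XUc (H : DG m T X P Q) {j a b : ℕ} (hj : j ≤ m) (hb : b ≤ m) (h : j < a ∨ b < j) :
    Commute (X j) (Up T a b) :=
  Up_comm T _ _ _ fun l _ _ => (H.TX l j (by omega) hj (by omega) (by omega)).symm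
theorem XDc (H : DG m T X P Q) {j a b : ℕ} (hj : j ≤ m) (hb : b ≤ m) (h : j < a ∨ b < j) :
    Commute (X j) (Dn T a b) :=
  Dn_comm T _ _ _ fun l _ _ => (H.TX l j (by omega) hj (by omega) (by omega)).symm

theorem YR (i j : ℕ) (hji : j < i) :
    Yg T P m i * Rg T i j = Up T i m * P * (Dn T 0 j)⁻¹ * T j * (Dn T (j + 1) i)⁻¹ := by
  have h4 : Dn T 0 i = Dn T (j + 1) i * T j * Dn T 0 j := by
    rw [Dn_split T (Nat.zero_le j) hji.le, Dn_left T hji]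
  unfold Yg Rg
  rw [h4, pow_two]; group

theorem YXlt (H : DG m T X P Q) {i j : ℕ} (hi : i ≤ m) (hji : j < i) :
    Yg T P m i * Rg T i j * X j = X j * Yg T P m i := by
  have h1 : Commute (X j) (Dn T (j + 1) i)⁻¹ := (H.XDc (by omega) hi (by omega)).inv_right
  have h2 : Commute (X (j + 1)) (Dn T 0 j)⁻¹ := (H.XDc (by omega) (by omega) (by omega)).inv_right
  have h3 : Commute (X j) (Up T i m) := H.XUc (by omega) le_rfl (by omega)
  have h4 : Dn T 0 i = Dn T (j + 1) i * T j * Dn T 0 j := by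
    rw [Dn_split T (Nat.zero_le j) hji.le, Dn_left T hji]
  rw [YR i j hji]
  unfold Yg
  rw [h4]
  calc _ = Up T i m * P * (Dn T 0 j)⁻¹ * T j * ((Dn T (j + 1) i)⁻¹ * X j) := by group
    _ = Up T i m * P * (Dn T 0 j)⁻¹ * (T j * X j) * (Dn T (j + 1) i)⁻¹ := by rw [← h1.eq]; group
    _ = Up T i m * P * ((Dn T 0 j)⁻¹ * X (j + 1)) * (T j)⁻¹ * (Dn T (j + 1) i)⁻¹ := by
      rw [H.TX1 (by omega)]; group
    _ = Up T i m * (P * X (j + 1)) * (Dn T 0 j)⁻¹ * (T j)⁻¹ * (Dn T (j + 1) i)⁻¹ := by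
      rw [← h2.eq]; group
    _ = (Up T i m * X j) * P * (Dn T 0 j)⁻¹ * (T j)⁻¹ * (Dn T (j + 1) i)⁻¹ := by
      rw [H.PX j (by omega)]; group
    _ = _ := by rw [← h3.eq]; group

theorem YXgt (H : DG m T X P Q) {i j : ℕ} (hij : i < j) (hj : j ≤ m) :
    Yg T P m i * X j = X j * (Ag T i j)⁻¹ * Yg T P m i := by
  obtain ⟨r, rfl⟩ : ∃ r, j = r + 1 := ⟨j - 1, by omega⟩
  have h1 : Commute (X (r + 1)) (Dn T 0 i)⁻¹ := (H.XDc (by omega) (by omega) (by omega)).inv_right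
  have h2 : Commute (X r) (Up T (r + 1) m) := H.XUc (by omega) le_rfl (by omega)
  have h3 : Commute (X (r + 1)) (Up T i r) := H.XUc (by omega) (by omega) (by omega)
  have h4 : Up T i m = Up T i r * T r * Up T (r + 1) m := by
    rw [Up_split T (show i ≤ r by omega) (show r ≤ m by omega), Up_left T (show r < m by omega)]
    group
  rw [H.A_alt (by omega) (by omega)]
  unfold Yg
  rw [h4]
  calc _ = Up T i r * T r * Up T (r + 1) m * P * ((Dn T 0 i)⁻¹ * X (r + 1)) := by group
    _ = Up T i r * T r * Up T (r + 1) m * (P * X (r + 1)) * (Dn T 0 i)⁻¹ := by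
      rw [← h1.eq]; group
    _ = Up T i r * T r * (Up T (r + 1) m * X r) * P * (Dn T 0 i)⁻¹ := by
      rw [H.PX r (by omega)]; group
    _ = Up T i r * (T r * X r) * Up T (r + 1) m * P * (Dn T 0 i)⁻¹ := by
      rw [← h2.eq]; group
    _ = (Up T i r * X (r + 1)) * (T r)⁻¹ * Up T (r + 1) m * P * (Dn T 0 i)⁻¹ := by
      rw [H.TX1 (by omega)]; group
    _ = _ := by rw [← h3.eq, pow_two]; group

theorem Ydlt (H : DG m T X P Q) {y : G} (hy : Good T P m y) {i k : ℕ} (hi : i ≤ m) (hki : k < i) :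
    Yg T P m i * dg T X m y k = dg T X m y k * (Yg T P m i * Rg T i k) := by
  obtain ⟨r, rfl⟩ : ∃ r, i = r + 1 := ⟨i - 1, by omega⟩
  have a1 : Dn T k (r + 1) * (Up T (k + 1) (r + 1))⁻¹ = (Up T k r)⁻¹ * Dn T k (r + 1) := by
    rw [eq_inv_mul_iff_mul_eq, ← mul_assoc, ← H.VUs (a := k) (b := r + 1) le_rfl (by omega)
      (by omega) hi]; group
  have a2 : Dn T k (r + 1) * (Dn T (k + 1) (r + 1))⁻¹ = (Dn T k r)⁻¹ * Dn T k (r + 1) := by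
    rw [eq_inv_mul_iff_mul_eq, ← mul_assoc, ← H.VVs (a := k) (b := r + 1) le_rfl (by omega)
      (by omega) hi]; group
  have a3 : Commute (Yg T P m k) (Dn T (k + 1) (r + 1)) :=
    Dn_comm T _ _ _ fun l _ _ => H.YT (by omega) (by omega) (by omega)
  have a4 : Yg T P m (r + 1) = (Up T k (r + 1))⁻¹ * Yg T P m k * (Dn T k (r + 1))⁻¹ := by
    rw [Yrec k (r + 1) (by omega) hi]; group
  have a5 : Yg T P m r = (Up T k r)⁻¹ * Yg T P m k * (Dn T k r)⁻¹ := by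
    rw [Yrec k r (by omega) (by omega)]; group
  have a6 : Dn T k (r + 1) = Dn T (k + 1) (r + 1) * T k := Dn_left T hki
  have a7 : Up T k (r + 1) = T k * Up T (k + 1) (r + 1) := Up_left T hki
  have e1 : Dn T k (r + 1) * (Yg T P m (r + 1) * Rg T (r + 1) k) =
      Yg T P m r * Dn T k (r + 1) := by
    unfold Rg
    rw [a4, a5, a7]
    calc _ = (Dn T k (r + 1) * (Up T (k + 1) (r + 1))⁻¹) * (T k)⁻¹ * Yg T P m k
          * (Dn T k (r + 1))⁻¹ * (Dn T (k + 1) (r + 1) * T k ^ 2 * (Dn T (k + 1) (r + 1))⁻¹) := by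
          group
      _ = (Up T k r)⁻¹ * (Dn T k (r + 1) * (T k)⁻¹) * Yg T P m k
          * ((Dn T k (r + 1))⁻¹ * (Dn T (k + 1) (r + 1) * T k ^ 2 * (Dn T (k + 1) (r + 1))⁻¹)) := by
          rw [a1]; group
      _ = (Up T k r)⁻¹ * (Dn T (k + 1) (r + 1) * Yg T P m k)
          * (T k * (Dn T (k + 1) (r + 1))⁻¹) := by
          rw [a6, pow_two]; group
      _ = (Up T k r)⁻¹ * Yg T P m k * ((Dn T (k + 1) (r + 1) * T k) * (Dn T (k + 1) (r + 1))⁻¹) := by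
          rw [← a3.eq]; group
      _ = _ := by rw [← a6, a2]; group
  have a8 : Commute (Yg T P m r) (Dn T (r + 1) m) :=
    Dn_comm T _ _ _ fun l _ _ => H.YT (by omega) (by omega) (by omega)
  have e2 : Dn T k m * (Yg T P m (r + 1) * Rg T (r + 1) k) = Yg T P m r * Dn T k m := by
    rw [Dn_split T (show k ≤ r + 1 by omega) hi, mul_assoc, e1, ← mul_assoc, ← a8.eq, mul_assoc]
  have e3 : Commute y (Yg T P m r) := hy.y r (by omega)
  have e4 : Yg T P m (r + 1) * (X k)⁻¹ = (X k)⁻¹ * (Yg T P m (r + 1) * Rg T (r + 1) k) := by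
    rw [eq_inv_mul_iff_mul_eq, ← mul_assoc, ← H.YXlt hi hki]; group
  have e5 : Yg T P m (r + 1) * Rg T (r + 1) k = (Dn T k m)⁻¹ * Yg T P m r * Dn T k m := by
    rw [mul_assoc, ← e2]; group
  rw [H.dX y (by omega), ← mul_assoc (Yg T P m (r + 1)), e4, e5]
  calc _ = (X k)⁻¹ * (Dn T k m)⁻¹ * (Yg T P m r * y) * Dn T k m := by group
    _ = _ := by rw [← e3.eq]; group

theorem Ydgt (H : DG m T X P Q) {y : G} (hy : Good T P m y) {i k : ℕ} (hik : i < k) (hk : k ≤ m) :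
    Yg T P m i * dg T X m y k = Ag T i k * dg T X m y k * Yg T P m i := by
  have e3 : Commute y (Yg T P m i) := hy.y i (by omega)
  have e5 : Commute (Yg T P m i) (Dn T k m) :=
    Dn_comm T _ _ _ fun l _ _ => H.YT (by omega) (by omega) (by omega)
  have e6 : Commute (Yg T P m i) ((Dn T k m)⁻¹ * y * Dn T k m) :=
    (e5.inv_right.mul_right e3.symm).mul_right e5
  have e4 : Yg T P m i * (X k)⁻¹ = Ag T i k * (X k)⁻¹ * Yg T P m i := by
    rw [mul_inv_eq_iff_eq_mul, mul_assoc, H.YXgt hik hk]; group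
  rw [H.dX y (by omega), ← mul_assoc, e4, mul_assoc, e6.eq]; group

theorem AUc (g : G) (i k : ℕ) (h : ∀ l, i ≤ l → l < k → Commute g (T l)) (hik : i < k) :
    Commute g (Ag T i k) := by
  have := Up_comm T g (i + 1) k fun l h1 h2 => h l (by omega) h2
  exact (this.inv_right.mul_right ((h i le_rfl hik).pow_right 2)).mul_right this

/-- conjugated form of `A` -/
theorem A_conj (H : DG m T X P Q) {i j k : ℕ} (hij : i ≤ j) (hjk : j < k) (hk : k ≤ m) :
    Ag T i k = Up T i j * Ag T j k * (Up T i j)⁻¹ := by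
  obtain ⟨r, rfl⟩ : ∃ r, k = r + 1 := ⟨k - 1, by omega⟩
  rw [H.A_alt (by omega) (by omega), H.A_alt (by omega) (by omega),
    Up_split T hij (show j ≤ r by omega)]
  group

theorem G3 (H : DG m T X P Q) {y : G} (hy : Good T P m y) {i j k : ℕ} (hi : i ≤ m) (hj : j ≤ m)
    (hk : k ≤ m) (hij : i ≠ j) (hjk : j ≠ k) (hik : i ≠ k) :
    Yg T P m i * (if j < i then Rg T i j else 1) * (X j * dg T X m y k)
        * (if k < i then (Rg T i k)⁻¹ else 1) * (Yg T P m i)⁻¹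
      = (if i < k then Ag T i k else 1) * (X j * dg T X m y k)
        * (if i < j then (Ag T i j)⁻¹ else 1) := by
  rw [mul_inv_eq_iff_eq_mul]
  rcases lt_or_gt_of_ne hij with h | h <;> rcases lt_or_gt_of_ne hik with h' | h'
  · simp only [h, h', h.not_gt, h'.not_gt, if_true, if_false, mul_one]
    have e : X j * (Ag T i j)⁻¹ * (Ag T i k * dg T X m y k) =
        Ag T i k * X j * dg T X m y k * (Ag T i j)⁻¹ := by
      rcases lt_or_gt_of_ne hjk with g | g
      · have c1 : Commute (dg T X m y k) (Ag T i j) :=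
          AUc _ _ _ (fun l _ _ => (H.dT hy (by omega) (by omega) (by omega)).symm) h
        have c2 : X j * (Ag T i j)⁻¹ = Up T i j * X (j - 1) * (Up T i j)⁻¹ := by
          obtain ⟨r, rfl⟩ : ∃ r, j = r + 1 := ⟨j - 1, by omega⟩
          have c3 : Commute (X (r + 1)) (Up T i r) := H.XUc hj (by omega) (by omega)
          rw [H.A_alt (by omega) (by omega), Up_right T (show i ≤ r by omega), Nat.add_sub_cancel]
          calc _ = (X (r + 1) * Up T i r) * (T r)⁻¹ * (T r)⁻¹ * (Up T i r)⁻¹ := by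
                rw [pow_two]; group
            _ = Up T i r * (X (r + 1) * (T r)⁻¹) * (T r)⁻¹ * (Up T i r)⁻¹ := by rw [c3.eq]; group
            _ = _ := by rw [← H.TX1 (by omega)]; group
        have c4 : Commute (X (j - 1)) (Ag T j k) :=
          AUc _ _ _ (fun l _ _ => (H.TX l _ (by omega) (by omega) (by omega) (by omega)).symm) g
        have c5 := c1.inv_right.eq
        rw [mul_assoc _ (dg T X m y k), c5, c2, H.A_conj h.le g hk]
        calc _ = Up T i j * (X (j - 1) * Ag T j k) * (Up T i j)⁻¹ * dg T X m y k := by group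
          _ = Up T i j * Ag T j k * (Up T i j)⁻¹ * (Up T i j * X (j - 1) * (Up T i j)⁻¹)
              * dg T X m y k := by rw [c4.eq]; group
          _ = _ := by rw [← c2]; group
      · have c1 : Commute (X j) (Ag T i k) :=
          AUc _ _ _ (fun l _ _ => (H.TX l _ (by omega) (by omega) (by omega) (by omega)).symm) h'
        have c2 : Ag T i k * dg T X m y k = Up T i k * dg T X m y (k - 1) * (Up T i k)⁻¹ := by
          obtain ⟨r, rfl⟩ : ∃ r, k = r + 1 := ⟨k - 1, by omega⟩
          have c3 : Commute (dg T X m y (r + 1)) (Up T i r) :=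
            Up_comm T _ _ _ fun l _ _ => (H.dT hy (by omega) (by omega) (by omega)).symm
          rw [H.A_alt (by omega) (by omega), Up_right T (show i ≤ r by omega), Nat.add_sub_cancel,
            drec (k := r) y (by omega)]
          calc _ = Up T i r * T r ^ 2 * ((Up T i r)⁻¹ * dg T X m y (r + 1)) := by group
            _ = _ := by rw [← c3.inv_right.eq, pow_two]; group
        have c4 : Commute (dg T X m y (k - 1)) (Ag T k j) :=
          AUc _ _ _ (fun l _ _ => (H.dT hy (by omega) (by omega) (by omega)).symm) g
        have c5 := c4.inv_right.eq
        rw [← c1.eq]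
        rw [mul_assoc (X j) (Ag T i k), c2, H.A_conj h'.le g hj]
        calc _ = X j * Up T i k * ((Ag T k j)⁻¹ * dg T X m y (k - 1)) * (Up T i k)⁻¹ := by group
          _ = _ := by rw [← c5]; group
    rw [← mul_assoc, H.YXgt h hj, mul_assoc _ (Yg T P m i), H.Ydgt hy h' hk, ← mul_assoc, e]
    group
  · simp only [h, h', h.not_gt, h'.not_gt, if_true, if_false, mul_one, one_mul]
    have c1 : Commute (dg T X m y k) (Ag T i j) :=
      AUc _ _ _ (fun l _ _ => (H.dT hy (by omega) (by omega) (by omega)).symm) h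
    rw [← mul_assoc, H.YXgt h hj, mul_assoc _ (Yg T P m i), H.Ydlt hy hi h']
    calc _ = X j * ((Ag T i j)⁻¹ * dg T X m y k) * Yg T P m i := by group
      _ = _ := by rw [← c1.inv_right.eq]; group
  · simp only [h, h', h.not_gt, h'.not_gt, if_true, if_false, mul_one]
    have c1 : Commute (X j) (Ag T i k) :=
      AUc _ _ _ (fun l _ _ => (H.TX l _ (by omega) (by omega) (by omega) (by omega)).symm) h'
    rw [← mul_assoc, H.YXlt hi h, mul_assoc _ (Yg T P m i), H.Ydgt hy h' hk]
    calc _ = (X j * Ag T i k) * dg T X m y k * Yg T P m i := by group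
      _ = _ := by rw [c1.eq]; group
  · simp only [h, h', h.not_gt, h'.not_gt, if_true, if_false, mul_one, one_mul]
    rw [← mul_assoc, H.YXlt hi h, mul_assoc _ (Yg T P m i), H.Ydlt hy hi h']
    group


theorem Jc (g : G) (i : ℕ) (h : ∀ l, l < i → Commute g (T l)) : Commute g (Jg T i) :=
  (Dn_comm T _ _ _ fun l _ h2 => h l h2).mul_right (Up_comm T _ _ _ fun l _ h2 => h l h2)

theorem G1a (H : DG m T X P Q) {y : G} (hy : Good T P m y) {i r : ℕ} (hir : i ≤ r) (hr : r < m) :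
    Yg T P m i * (X i * dg T X m y (r + 1)) * (Jg T i)⁻¹ * (Yg T P m i)⁻¹ =
      Q * (Kg T m i * X i * Up T i r * T r ^ 2 * ((Up T i r)⁻¹ * dg T X m y (r + 1))) := by
  have c1 : Commute (dg T X m y (r + 1)) (Jg T i)⁻¹ :=
    (Jc _ _ fun l _ => (H.dT hy (by omega) (by omega) (by omega)).symm).inv_right
  have h1 := H.Ydgt hy (show i < r + 1 by omega) hr
  rw [H.A_alt hir hr] at h1
  calc _ = (Yg T P m i * X i) * (dg T X m y (r + 1) * (Jg T i)⁻¹) * (Yg T P m i)⁻¹ := by group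
    _ = Q * Kg T m i * X i * (Yg T P m i * dg T X m y (r + 1)) * (Yg T P m i)⁻¹ := by
      rw [H.YX0 (by omega), c1.eq]; group
    _ = _ := by rw [h1]; group

theorem KX (H : DG m T X P Q) {i : ℕ} (hi : i ≤ m) :
    Kg T m i * X i = Up T i m * X m * (Up T i m)⁻¹ := by
  rw [eq_mul_inv_iff_mul_eq, mul_assoc, H.XU hi le_rfl]; unfold Kg; group

theorem G1a' (H : DG m T X P Q) {y : G} (hy : Good T P m y) {i r : ℕ} (hir : i ≤ r) (hr : r < m) :
    Kg T m i * X i * Up T i r * T r * ((Up T i r)⁻¹ * dg T X m y (r + 1)) =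
      Up T i m * (Up T i r)⁻¹ * y * Dn T (r + 1) m := by
  have c1 : Commute (Up T (r + 1) m) (Up T i r)⁻¹ :=
    (Up_comm T _ _ _ fun l _ _ => (Up_comm T _ _ _ fun k _ _ =>
      H.farc (by omega) (by omega) (by omega)).symm).inv_right
  have c2 : Commute (X m) (Up T i r)⁻¹ := (H.XUc le_rfl (by omega) (by omega)).inv_right
  have h1 : Up T i m = Up T i r * T r * Up T (r + 1) m := by
    rw [Up_split T (show i ≤ r + 1 by omega) hr, Up_right T hir]
  rw [H.KX (by omega)]
  unfold dg
  calc _ = Up T i m * X m * ((Up T i m)⁻¹ * (Up T i r * T r)) * (Up T i r)⁻¹ *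
        (Up T (r + 1) m * ((X m)⁻¹ * y) * Dn T (r + 1) m) := by group
    _ = Up T i m * X m * (Up T (r + 1) m)⁻¹ * ((Up T i r)⁻¹ * Up T (r + 1) m) *
        ((X m)⁻¹ * y) * Dn T (r + 1) m := by rw [h1]; group
    _ = Up T i m * (X m * (Up T i r)⁻¹) * (X m)⁻¹ * y * Dn T (r + 1) m := by
      rw [← c1.eq]; group
    _ = _ := by rw [c2.eq]; group

theorem UDc (H : DG m T X P Q) {a b c d : ℕ} (h : b < c) (hd : d ≤ m) :
    Commute (Up T a b) (Dn T c d) :=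
  Dn_comm T _ _ _ fun l _ _ => (Up_comm T _ _ _ fun k _ _ =>
      H.farc (by omega) (by omega) (by omega)).symm

theorem G1b (H : DG m T X P Q) {y : G} (hy : Good T P m y) {i j : ℕ} (hi : i ≤ m) (hji : j < i) :
    Yg T P m i * (X i * dg T X m y j) * (Jg T i)⁻¹ * (Yg T P m i)⁻¹ =
      Q * (Kg T m i * X i * Up T i m * P * Up T 0 j * T j ^ 2 *
        (dg T X m y (j + 1) * (Up T 0 j)⁻¹ * P⁻¹ * (Up T i m)⁻¹)) := by
  have h1 : Up T 0 i = Up T 0 j * T j * Up T (j + 1) i := by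
    rw [Up_split T (Nat.zero_le (j + 1)) hji, Up_right T (Nat.zero_le j)]
  have h2 : Yg T P m i * Jg T i = Up T i m * P * Up T 0 i := by unfold Yg Jg; group
  have h3 : (Jg T i)⁻¹ * (Yg T P m i)⁻¹ = (Up T 0 i)⁻¹ * P⁻¹ * (Up T i m)⁻¹ := by
    rw [← mul_inv_rev, h2]; group
  have c1 : Commute (dg T X m y j) (Up T (j + 1) i) :=
    Up_comm T _ _ _ fun l _ _ => (H.dT hy (by omega) (by omega) (by omega)).symm
  calc _ = (Yg T P m i * X i) * dg T X m y j * ((Jg T i)⁻¹ * (Yg T P m i)⁻¹) := by group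
    _ = Q * (Kg T m i * X i) * (Yg T P m i * Jg T i) * dg T X m y j *
        ((Up T 0 i)⁻¹ * P⁻¹ * (Up T i m)⁻¹) := by rw [H.YX0 hi, h3]; group
    _ = Q * (Kg T m i * X i) * (Up T i m * P) * Up T 0 j * T j * (Up T (j + 1) i * dg T X m y j) *
        ((Up T 0 i)⁻¹ * P⁻¹ * (Up T i m)⁻¹) := by rw [h2, h1]; group
    _ = _ := by rw [← c1.eq, h1, drec (k := j) y (by omega), pow_two]; group

theorem G1b1 (H : DG m T X P Q) {y : G} (hy : Good T P m y) {i j : ℕ} (hi : i ≤ m) (hji : j < i) :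
    Kg T m i * X i * Up T i m * P * Up T 0 j *
        (dg T X m y (j + 1) * (Up T 0 j)⁻¹ * P⁻¹ * (Up T i m)⁻¹) =
      Kg T m i * (X i * dg T X m y j) := by
  have c1 : Commute (dg T X m y (j + 1)) (Up T 0 j) :=
    Up_comm T _ _ _ fun l _ _ => (H.dT hy (by omega) (by omega) (by omega)).symm
  have c2 : Commute (dg T X m y j) (Up T i m) :=
    Up_comm T _ _ _ fun l _ _ => (H.dT hy (by omega) (by omega) (by omega)).symm
  calc _ = Kg T m i * X i * Up T i m * P * (Up T 0 j * dg T X m y (j + 1)) *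
        ((Up T 0 j)⁻¹ * P⁻¹ * (Up T i m)⁻¹) := by group
    _ = Kg T m i * X i * Up T i m * (P * dg T X m y (j + 1)) * (P⁻¹ * (Up T i m)⁻¹) := by
      rw [← c1.eq]; group
    _ = Kg T m i * X i * (Up T i m * dg T X m y j) * (Up T i m)⁻¹ := by
      rw [H.Pd hy (by omega)]; group
    _ = _ := by rw [← c2.eq]; group

theorem G1b2 (H : DG m T X P Q) {y : G} (hy : Good T P m y) {i j : ℕ} (hi : i ≤ m) (hji : j < i) :
    Q * (Kg T m i * X i * Up T i m * P * Up T 0 j * T j *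
        (dg T X m y (j + 1) * (Up T 0 j)⁻¹ * P⁻¹ * (Up T i m)⁻¹)) =
      Up T i m * (Up T 0 j)⁻¹ * (Dn T 0 (m - 1))⁻¹ * (Yg T P m (m - 1))⁻¹ * (Yg T P m m * y) *
        Dn T j m * (Up T i m)⁻¹ := by
  obtain ⟨r, rfl⟩ : ∃ r, m = r + 1 := ⟨m - 1, by omega⟩
  rw [Nat.add_sub_cancel]
  have h1 := H.XU (Nat.zero_le j) (by omega)
  have h2 : T j * dg T X (r + 1) y (j + 1) = dg T X (r + 1) y j * (T j)⁻¹ := by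
    rw [drec (k := j) y (by omega)]; group
  have h3 : X j * dg T X (r + 1) y j = (Dn T j (r + 1))⁻¹ * y * Dn T j (r + 1) := by
    rw [H.dX y (by omega)]; group
  have h4 : Yg T P (r + 1) (r + 1) = P * (Dn T 0 j)⁻¹ * (Dn T j (r + 1))⁻¹ := by
    unfold Yg; rw [Up_self, Dn_split T (Nat.zero_le j) (show j ≤ r + 1 by omega)]; group
  have h5 : Dn T j (r + 1) = Dn T (j + 1) (r + 1) * T j := Dn_left T (by omega)
  have L : Q * (Kg T (r + 1) i * X i * Up T i (r + 1) * P * Up T 0 j * T j *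
        (dg T X (r + 1) y (j + 1) * (Up T 0 j)⁻¹ * P⁻¹ * (Up T i (r + 1))⁻¹)) =
      Up T i (r + 1) * (Yg T P (r + 1) (r + 1) * y) * Dn T (j + 1) (r + 1) * (Up T 0 j)⁻¹ * P⁻¹
        * (Up T i (r + 1))⁻¹ := by
    rw [H.KX hi]
    calc _ = (Q * Up T i (r + 1)) * X (r + 1) * P * Up T 0 j * (T j * dg T X (r + 1) y (j + 1)) *
          ((Up T 0 j)⁻¹ * P⁻¹ * (Up T i (r + 1))⁻¹) := by group
      _ = Up T i (r + 1) * (Q * X (r + 1) * P) * Up T 0 j * (dg T X (r + 1) y j * (T j)⁻¹) *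
          ((Up T 0 j)⁻¹ * P⁻¹ * (Up T i (r + 1))⁻¹) := by rw [(H.Qc _).eq, h2]; group
      _ = Up T i (r + 1) * P * (X 0 * Up T 0 j) * (dg T X (r + 1) y j * (T j)⁻¹) *
          ((Up T 0 j)⁻¹ * P⁻¹ * (Up T i (r + 1))⁻¹) := by rw [← H.PX0]; group
      _ = Up T i (r + 1) * P * (Dn T 0 j)⁻¹ * (X j * dg T X (r + 1) y j) * (T j)⁻¹ *
          ((Up T 0 j)⁻¹ * P⁻¹ * (Up T i (r + 1))⁻¹) := by rw [h1]; group
      _ = _ := by rw [h3, h4, h5]; group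
  rw [L]
  have c1 : Commute (Yg T P (r + 1) (r + 1) * y) ((Up T 0 j)⁻¹ * (Dn T 0 r)⁻¹ * (Yg T P (r + 1) r)⁻¹) := by
    have a1 : ∀ l, l < r → Commute (Yg T P (r + 1) (r + 1) * y) (T l) := fun l hl =>
      (H.YT le_rfl (by omega) (by omega)).mul_left (hy.t l (by omega))
    refine (Commute.mul_right ?_ ?_).mul_right ?_
    · exact (Up_comm T _ _ _ fun l _ _ => a1 l (by omega)).inv_right
    · exact (Dn_comm T _ _ _ fun l _ _ => a1 l (by omega)).inv_right
    · exact ((H.YY (by omega)).mul_left (hy.y r (by omega))).inv_right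
  have c2 : (Dn T 0 r)⁻¹ * (Yg T P (r + 1) r)⁻¹ * Dn T j (r + 1) = Dn T (j + 1) (r + 1) * P⁻¹ := by
    rw [eq_mul_inv_iff_mul_eq, Dn_right T (show j ≤ r by omega)]
    unfold Yg
    rw [Up_one]
    calc _ = P⁻¹ * (Dn T j r * P) := by group
      _ = _ := by rw [← H.PV (by omega) (by omega)]; group
  have c3 : Commute (Up T 0 j)⁻¹ (Dn T (j + 1) (r + 1)) := (H.UDc (by omega) le_rfl).inv_left
  symm
  calc _ = Up T i (r + 1) * (((Up T 0 j)⁻¹ * (Dn T 0 r)⁻¹ * (Yg T P (r + 1) r)⁻¹) *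
        (Yg T P (r + 1) (r + 1) * y)) * Dn T j (r + 1) * (Up T i (r + 1))⁻¹ := by group
    _ = Up T i (r + 1) * (Yg T P (r + 1) (r + 1) * y) * (Up T 0 j)⁻¹ *
        ((Dn T 0 r)⁻¹ * (Yg T P (r + 1) r)⁻¹ * Dn T j (r + 1)) * (Up T i (r + 1))⁻¹ := by
        rw [← c1.eq]; group
    _ = Up T i (r + 1) * (Yg T P (r + 1) (r + 1) * y) * ((Up T 0 j)⁻¹ * Dn T (j + 1) (r + 1)) *
        P⁻¹ * (Up T i (r + 1))⁻¹ := by rw [c2]; group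
    _ = _ := by rw [c3.eq]; group

theorem G2a (H : DG m T X P Q) {y : G} (hy : Good T P m y) {i r : ℕ} (hir : i ≤ r) (hr : r < m) :
    Yg T P m i * Jg T i * (X (r + 1) * dg T X m y i) * (Yg T P m i)⁻¹ =
      Q⁻¹ * (X (r + 1) * Up T i r * (T r)⁻¹ ^ 2 *
        ((Up T i r)⁻¹ * dg T X m y i * (Kg T m i)⁻¹)) := by
  have c1 : Commute (X (r + 1)) (Jg T i) :=
    (Jc _ _ fun l _ => (H.TX _ _ (by omega) (by omega) (by omega) (by omega)).symm)
  have h1 := H.YXgt (show i < r + 1 by omega) hr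
  rw [H.A_alt hir hr] at h1
  have c2 := (H.Qc (X (r + 1) * (Up T i r * T r ^ 2 * (Up T i r)⁻¹)⁻¹)).inv_left.eq
  calc _ = Yg T P m i * (Jg T i * X (r + 1)) * dg T X m y i * (Yg T P m i)⁻¹ := by group
    _ = (Yg T P m i * X (r + 1)) * Jg T i * dg T X m y i * (Yg T P m i)⁻¹ := by
      rw [← c1.eq]; group
    _ = X (r + 1) * (Up T i r * T r ^ 2 * (Up T i r)⁻¹)⁻¹ * (Yg T P m i * Jg T i * dg T X m y i)
        * (Yg T P m i)⁻¹ := by rw [h1]; group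
    _ = (X (r + 1) * (Up T i r * T r ^ 2 * (Up T i r)⁻¹)⁻¹ * Q⁻¹) * dg T X m y i * (Kg T m i)⁻¹ := by
      rw [H.YJd hy (by omega)]; group
    _ = _ := by rw [← c2, pow_two, pow_two]; group

theorem dK (y : G) (i : ℕ) :
    dg T X m y i * (Kg T m i)⁻¹ = Up T i m * ((X m)⁻¹ * y) * (Up T i m)⁻¹ := by
  unfold dg Kg; group

theorem G2a' (H : DG m T X P Q) {y : G} (hy : Good T P m y) {i r : ℕ} (hir : i ≤ r) (hr : r < m) :
    X (r + 1) * Up T i r * (T r)⁻¹ * ((Up T i r)⁻¹ * dg T X m y i * (Kg T m i)⁻¹) =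
      (Dn T (r + 1) m)⁻¹ * y * Up T i r * (Up T i m)⁻¹ := by
  have c1 : Commute (X (r + 1)) (Up T i r) := H.XUc (by omega) (by omega) (by omega)
  have c2 : Commute (Up T i r) (Dn T (r + 1) m)⁻¹ := (H.UDc (by omega) le_rfl).inv_right
  have c3 : Commute y (Up T i r) := Up_comm T _ _ _ fun l _ _ => hy.t l (by omega)
  have h1 : Up T i m = Up T i r * T r * Up T (r + 1) m := by
    rw [Up_split T (show i ≤ r + 1 by omega) hr, Up_right T hir]
  have h2 := H.XU (i := r + 1) hr le_rfl
  rw [mul_assoc _ (dg T X m y i), dK]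
  calc _ = (X (r + 1) * Up T i r) * ((T r)⁻¹ * (Up T i r)⁻¹ * Up T i m) * (X m)⁻¹ * y
        * (Up T i m)⁻¹ := by group
    _ = (X (r + 1) * Up T i r) * Up T (r + 1) m * (X m)⁻¹ * y * (Up T i m)⁻¹ := by
        rw [h1]; group
    _ = Up T i r * (X (r + 1) * Up T (r + 1) m) * (X m)⁻¹ * y * (Up T i m)⁻¹ := by
        rw [c1.eq]; group
    _ = (Up T i r * (Dn T (r + 1) m)⁻¹) * y * (Up T i m)⁻¹ := by rw [h2]; group
    _ = (Dn T (r + 1) m)⁻¹ * (Up T i r * y) * (Up T i m)⁻¹ := by rw [c2.eq]; group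
    _ = _ := by rw [← c3.eq]; group

theorem G2b (H : DG m T X P Q) {y : G} (hy : Good T P m y) {i j : ℕ} (hi : i ≤ m) (hji : j < i) :
    Yg T P m i * Jg T i * (X j * dg T X m y i) * (Yg T P m i)⁻¹ =
      Q⁻¹ * (X j * Up T i m * P * Up T 0 j * (T j)⁻¹ ^ 2 *
        ((Up T 0 j)⁻¹ * P⁻¹ * (Up T i m)⁻¹ * dg T X m y i * (Kg T m i)⁻¹)) := by
  have h1 : Up T 0 i = Up T 0 j * T j * Up T (j + 1) i := by
    rw [Up_split T (Nat.zero_le (j + 1)) hji, Up_right T (Nat.zero_le j)]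
  have h2 : Yg T P m i * Jg T i = Up T i m * P * Up T 0 i := by unfold Yg Jg; group
  have c1 : Commute (X j) (Up T (j + 1) i) := H.XUc (by omega) (by omega) (by omega)
  have c2 : Commute (X (j + 1)) (Up T 0 j) := H.XUc (by omega) (by omega) (by omega)
  have c3 : Commute (X j) (Up T i m) := H.XUc (by omega) (by omega) (by omega)
  have h3 : Yg T P m i * Jg T i * X j = X j * Up T i m * P * Up T 0 j * (T j)⁻¹ ^ 2 *
        (Up T 0 j)⁻¹ * P⁻¹ * (Up T i m)⁻¹ * (Yg T P m i * Jg T i) := by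
    rw [h2]
    calc _ = Up T i m * P * Up T 0 j * T j * (Up T (j + 1) i * X j) := by rw [h1]; group
      _ = Up T i m * P * Up T 0 j * (T j * X j) * Up T (j + 1) i := by rw [← c1.eq]; group
      _ = Up T i m * P * (Up T 0 j * X (j + 1)) * (T j)⁻¹ * Up T (j + 1) i := by
        rw [H.TX1 (by omega)]; group
      _ = Up T i m * (P * X (j + 1)) * Up T 0 j * (T j)⁻¹ * Up T (j + 1) i := by
        rw [← c2.eq]; group
      _ = (Up T i m * X j) * P * Up T 0 j * (T j)⁻¹ * Up T (j + 1) i := by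
        rw [H.PX j (by omega)]; group
      _ = _ := by rw [← c3.eq, h1, pow_two]; group
  have c4 := (H.Qc (X j * Up T i m * P * Up T 0 j * (T j)⁻¹ ^ 2 *
        (Up T 0 j)⁻¹ * P⁻¹ * (Up T i m)⁻¹)).inv_left.eq
  calc _ = (Yg T P m i * Jg T i * X j) * dg T X m y i * (Yg T P m i)⁻¹ := by group
    _ = (X j * Up T i m * P * Up T 0 j * (T j)⁻¹ ^ 2 *
        (Up T 0 j)⁻¹ * P⁻¹ * (Up T i m)⁻¹) * (Yg T P m i * Jg T i * dg T X m y i) *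
          (Yg T P m i)⁻¹ := by rw [h3]; simp only [mul_assoc]
    _ = (X j * Up T i m * P * Up T 0 j * (T j)⁻¹ ^ 2 *
        (Up T 0 j)⁻¹ * P⁻¹ * (Up T i m)⁻¹) * Q⁻¹ * dg T X m y i * (Kg T m i)⁻¹ := by
      rw [H.YJd hy hi]; simp only [mul_assoc, mul_inv_cancel, mul_one]
    _ = _ := by rw [← c4]; simp only [mul_assoc]

theorem G2b' (H : DG m T X P Q) {y : G} (hy : Good T P m y) {i j : ℕ} (hi : i ≤ m) (hji : j < i) :
    Q⁻¹ * (X j * Up T i m * P * Up T 0 j * (T j)⁻¹ *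
        ((Up T 0 j)⁻¹ * P⁻¹ * (Up T i m)⁻¹ * dg T X m y i * (Kg T m i)⁻¹)) =
      Up T i m * (Dn T j m)⁻¹ * Yg T P m (m - 1) * ((Yg T P m m)⁻¹ * y) * Dn T 0 (m - 1) *
        Up T 0 j * (Up T i m)⁻¹ := by
  obtain ⟨r, rfl⟩ : ∃ r, m = r + 1 := ⟨m - 1, by omega⟩
  rw [Nat.add_sub_cancel]
  have h1 : P⁻¹ * (X (r + 1))⁻¹ = (X 0)⁻¹ * P⁻¹ * Q := by
    have : (P * X 0)⁻¹ = (Q * X (r + 1) * P)⁻¹ := by rw [H.PX0]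
    simp only [mul_inv_rev] at this
    rw [this]; group
  have h2 : (T j)⁻¹ * (Up T 0 j)⁻¹ * (X 0)⁻¹ = (X (j + 1))⁻¹ * Dn T 0 (j + 1) := by
    rw [← H.VXU (Nat.zero_le (j + 1)) (by omega), Up_right T (Nat.zero_le j)]; group
  have c1 : Commute (X (j + 1))⁻¹ (Up T 0 j) := (H.XUc (by omega) (by omega) (by omega)).inv_left
  have h3 : P * (X (j + 1))⁻¹ = (X j)⁻¹ * P := by
    rw [eq_inv_mul_iff_mul_eq, ← mul_assoc, ← H.PX j (by omega)]; group
  have c2 : Commute (X j) (Up T i (r + 1)) := H.XUc (by omega) (by omega) (by omega)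
  have L : X j * Up T i (r + 1) * P * Up T 0 j * (T j)⁻¹ *
        ((Up T 0 j)⁻¹ * P⁻¹ * (Up T i (r + 1))⁻¹ * dg T X (r + 1) y i * (Kg T (r + 1) i)⁻¹) =
      Q * (Up T i (r + 1) * P * Up T 0 j * Dn T 0 (j + 1) * P⁻¹ * y * (Up T i (r + 1))⁻¹) := by
    rw [mul_assoc _ (dg T X (r + 1) y i), dK]
    calc _ = X j * Up T i (r + 1) * P * Up T 0 j * (T j)⁻¹ * (Up T 0 j)⁻¹ * (P⁻¹ * (X (r + 1))⁻¹)
          * y * (Up T i (r + 1))⁻¹ := by group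
      _ = X j * Up T i (r + 1) * P * Up T 0 j * ((T j)⁻¹ * (Up T 0 j)⁻¹ * (X 0)⁻¹) * P⁻¹ * (Q
          * y * (Up T i (r + 1))⁻¹) := by rw [h1]; group
      _ = X j * Up T i (r + 1) * P * (Up T 0 j * (X (j + 1))⁻¹) * Dn T 0 (j + 1) * P⁻¹ * (Q
          * y * (Up T i (r + 1))⁻¹) := by rw [h2]; group
      _ = X j * Up T i (r + 1) * (P * (X (j + 1))⁻¹) * Up T 0 j * Dn T 0 (j + 1) * P⁻¹ * (Q
          * y * (Up T i (r + 1))⁻¹) := by rw [← c1.eq]; group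
      _ = X j * (Up T i (r + 1) * (X j)⁻¹) * P * Up T 0 j * Dn T 0 (j + 1) * P⁻¹ * (Q
          * y * (Up T i (r + 1))⁻¹) := by rw [h3]; group
      _ = (Up T i (r + 1) * P * Up T 0 j * Dn T 0 (j + 1) * P⁻¹ * Q)
          * y * (Up T i (r + 1))⁻¹ := by rw [← c2.inv_left.eq]; group
      _ = _ := by rw [← (H.Qc _).eq]; group
  rw [L]
  have a1 : ∀ l, l < r → Commute ((Yg T P (r + 1) (r + 1))⁻¹ * y) (T l) := fun l hl =>
    (H.YT le_rfl (by omega) (by omega)).inv_left.mul_left (hy.t l (by omega))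
  have c3 : Commute ((Yg T P (r + 1) (r + 1))⁻¹ * y) (Dn T 0 r * Up T 0 j) :=
    (Dn_comm T _ _ _ fun l _ _ => a1 l (by omega)).mul_right
      (Up_comm T _ _ _ fun l _ _ => a1 l (by omega))
  have h4 : (Dn T j (r + 1))⁻¹ * Yg T P (r + 1) r * Dn T 0 r = P * (Dn T (j + 1) (r + 1))⁻¹ := by
    rw [eq_mul_inv_iff_mul_eq, Dn_right T (show j ≤ r by omega)]
    unfold Yg
    rw [Up_one]
    calc _ = (Dn T j r)⁻¹ * (P * Dn T (j + 1) (r + 1)) := by group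
      _ = _ := by rw [H.PV (by omega) (by omega)]; group
  have h5 : (Yg T P (r + 1) (r + 1))⁻¹ = Dn T (j + 1) (r + 1) * Dn T 0 (j + 1) * P⁻¹ := by
    unfold Yg
    rw [Up_self, Dn_split T (Nat.zero_le (j + 1)) (show j + 1 ≤ r + 1 by omega)]; group
  have c4 : Commute (Up T 0 j) (Dn T (j + 1) (r + 1)) := H.UDc (by omega) le_rfl
  symm
  calc _ = Up T i (r + 1) * (Dn T j (r + 1))⁻¹ * Yg T P (r + 1) r *
        (((Yg T P (r + 1) (r + 1))⁻¹ * y) * (Dn T 0 r * Up T 0 j)) * (Up T i (r + 1))⁻¹ := by group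
    _ = Up T i (r + 1) * ((Dn T j (r + 1))⁻¹ * Yg T P (r + 1) r * Dn T 0 r) * Up T 0 j *
        (Yg T P (r + 1) (r + 1))⁻¹ * y * (Up T i (r + 1))⁻¹ := by rw [c3.eq]; group
    _ = Up T i (r + 1) * P * (Dn T (j + 1) (r + 1))⁻¹ * (Up T 0 j * Dn T (j + 1) (r + 1)) *
        Dn T 0 (j + 1) * P⁻¹ * y * (Up T i (r + 1))⁻¹ := by rw [h4, h5]; group
    _ = _ := by rw [c4.eq]; group

end DG
end GroupPart
theorem dom_braid {K : Type*} [CommRing K] [IsDomain K] {x y z t t' p a b ab ba c p1 p2 p3 s1p1 s2p1 s12p1 s1p2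
    r1 r2 r3 s1r1 s2r1 s21r1 s2r2 : K} (hxy : y - x ≠ 0) (hyz : z - y ≠ 0) (hxz : z - x ≠ 0)
    (h1 : (y - x) * p1 = (t' * y - t * x) * a + (t - t') * (y * p))
    (h2 : (x - y) * s1p1 = (t' * x - t * y) * p + (t - t') * (x * a))
    (h3 : (z - x) * s2p1 = (t' * z - t * x) * ba + (t - t') * (z * b))
    (h4 : (z - y) * s12p1 = (t' * z - t * y) * c + (t - t') * (z * ab))
    (h5 : (z - y) * p2 = (t' * z - t * y) * s2p1 + (t - t') * (z * p1))
    (h6 : (z - x) * s1p2 = (t' * z - t * x) * s12p1 + (t - t') * (z * s1p1))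
    (h7 : (y - x) * p3 = (t' * y - t * x) * s1p2 + (t - t') * (y * p2))
    (k1 : (z - y) * r1 = (t' * z - t * y) * b + (t - t') * (z * p))
    (k2 : (y - z) * s2r1 = (t' * y - t * z) * p + (t - t') * (y * b))
    (k3 : (z - x) * s1r1 = (t' * z - t * x) * ab + (t - t') * (z * a))
    (k4 : (y - x) * s21r1 = (t' * y - t * x) * c + (t - t') * (y * ba))
    (k5 : (y - x) * r2 = (t' * y - t * x) * s1r1 + (t - t') * (y * r1))
    (k6 : (z - x) * s2r2 = (t' * z - t * x) * s21r1 + (t - t') * (z * s2r1))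
    (k7 : (z - y) * r3 = (t' * z - t * y) * s2r2 + (t - t') * (z * r2)) : p3 = r3 := by
  have hyx : x - y ≠ 0 := fun h => hxy (by linear_combination -h)
  have hzy : y - z ≠ 0 := fun h => hyz (by linear_combination -h)
  have key : (y - x)^2 * (z - y)^2 * (z - x) * (p3 - r3) = 0 := by
    have e1 : (y - x)^2 * (z - y)^2 * (z - x) * p3 =
       (y-x)*(z-y)^2*(t' * y - t * x) * ((z-x)*s1p2) + (y-x)*(z-y)*(z-x)*(t - t') * (y * ((z-y)*p2)) := by
      linear_combination (y-x)*(z-y)^2*(z-x)*h7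
    rw [h6, h5] at e1
    have e2 : (y - x)^2 * (z - y)^2 * (z - x) * p3 =
       (y-x)*(z-y)*(t' * y - t * x) * ((t' * z - t * x) * ((z-y)*s12p1)) 
        - (z-y)^2*(t' * y - t * x) * ((t - t') * (z * ((x-y)*s1p1)))
        + (y-x)*(z-y)*(t - t') * (y * ((t' * z - t * y) * ((z-x)*s2p1)))
        + (z-y)*(z-x)*(t - t') * (y * ((t - t') * (z * ((y-x)*p1)))) := by
      linear_combination e1
    rw [h1, h2, h3, h4] at e2
    have f1 : (y - x)^2 * (z - y)^2 * (z - x) * r3 =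
       (y-x)^2*(z-y)*(t' * z - t * y) * ((z-x)*s2r2) + (y-x)*(z-y)*(z-x)*(t - t') * (z * ((y-x)*r2)) := by
      linear_combination (y-x)^2*(z-y)*(z-x)*k7
    rw [k6, k5] at f1
    have f2 : (y - x)^2 * (z - y)^2 * (z - x) * r3 =
       (y-x)*(z-y)*(t' * z - t * y) * ((t' * z - t * x) * ((y-x)*s21r1)) 
        - (y-x)^2*(t' * z - t * y) * ((t - t') * (z * ((y-z)*s2r1)))
        + (y-x)*(z-y)*(t - t') * (z * ((t' * y - t * x) * ((z-x)*s1r1)))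
        + (y-x)*(z-x)*(t - t') * (z * ((t - t') * (y * ((z-y)*r1)))) := by
      linear_combination f1
    rw [k1, k2, k3, k4] at f2
    rw [mul_sub, e2, f2]
    ring
  have h0 : (y - x)^2 * (z - y)^2 * (z - x) ≠ 0 := by
    have this2 := pow_ne_zero 2 hxy
    have this1 := pow_ne_zero 2 hyz
    exact mul_ne_zero (mul_ne_zero this2 this1) hxz
  exact sub_eq_zero.1 ((mul_eq_zero.1 key).resolve_left h0)

/-- `T` is a Demazure-Lusztig operator for the pair `(x, y)` swapped by `s`. -/
structure DL {L : Type*} [CommRing L] (t t' x y : L) (s : L →+* L) (T : L → L) : Prop where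
  eq : ∀ p, (y - x) * T p = (t' * y - t * x) * s p + (t - t') * (y * p)
  ne : y - x ≠ 0

section DLsec
variable {L : Type*} [CommRing L] [IsDomain L] {t t' : L}

theorem DL.twine {x y x' y' c : L} {s s' φ : L →+* L} {T T' : L → L}
    (h : DL t t' x y s T) (h' : DL t t' x' y' s' T') (hc : c ≠ 0)
    (hx : φ x = c * x') (hy : φ y = c * y') (ht : φ t = t) (ht' : φ t' = t')
    (hs : ∀ p, φ (s p) = s' (φ p)) (p : L) : φ (T p) = T' (φ p) := by
  have e1 := congrArg φ (h.eq p)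
  simp only [map_mul, map_add, map_sub, hx, hy, ht, ht', hs] at e1
  have e2 := h'.eq (φ p)
  have : (c * (y' - x')) * (φ (T p) - T' (φ p)) = 0 := by
    linear_combination e1 - c * e2
  exact sub_eq_zero.1 ((mul_eq_zero.1 this).resolve_left (mul_ne_zero hc h'.ne))

theorem DL.mulX {x y z : L} {s : L →+* L} {T : L → L}
    (h : DL t t' x y s T) (hz : s z = z) (p : L) : T (z * p) = z * T p := by
  have e1 := h.eq (z * p)
  have e2 := h.eq p
  simp only [map_mul, hz] at e1
  have : (y - x) * (T (z * p) - z * T p) = 0 := by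
    linear_combination e1 - z * e2
  exact sub_eq_zero.1 ((mul_eq_zero.1 this).resolve_left h.ne)

theorem DL.mulY {x y : L} {s : L →+* L} {T : L → L}
    (h : DL t t' x y s T) (hz : s y = x) (p : L) : T (y * p) = x * T p + (t - t') * (y * p) := by
  have e1 := h.eq (y * p)
  have e2 := h.eq p
  simp only [map_mul, hz] at e1
  have : (y - x) * (T (y * p) - (x * T p + (t - t') * (y * p))) = 0 := by
    linear_combination e1 - x * e2
  exact sub_eq_zero.1 ((mul_eq_zero.1 this).resolve_left h.ne)

theorem DL.far {x y z w : L} {s r : L →+* L} {T S : L → L}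
    (h : DL t t' x y s T) (h' : DL t t' z w r S)
    (hsz : s z = z) (hsw : s w = w) (hrx : r x = x) (hry : r y = y)
    (hst : s t = t) (hst' : s t' = t') (hrt : r t = t) (hrt' : r t' = t')
    (hsr : ∀ p, s (r p) = r (s p)) (p : L) : T (S p) = S (T p) := by
  have e1 := h.eq (S p)
  have e2 := h'.eq (T p)
  have e3 := h'.eq p
  have e4 := h.eq p
  have e5 := congrArg s e3
  have e6 := congrArg r e4
  simp only [map_mul, map_add, map_sub, hsz, hsw, hrx, hry, hst, hst', hrt, hrt', hsr] at e5 e6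
  have : (y - x) * (w - z) * (T (S p) - S (T p)) = 0 := by
    linear_combination (w - z) * e1 - (y - x) * e2 + (t' * y - t * x) * e5 +
      (t - t') * y * e3 - (t' * w - t * z) * e6 - (t - t') * w * e4
  exact sub_eq_zero.1 ((mul_eq_zero.1 this).resolve_left (mul_ne_zero h.ne h'.ne))

theorem DL.braid {x y z : L} {s r : L →+* L} {T S : L → L}
    (h : DL t t' x y s T) (h' : DL t t' y z r S) (hxz : z - x ≠ 0)
    (hsx : s x = y) (hsy : s y = x) (hsz : s z = z) (hrx : r x = x) (hry : r y = z) (hrz : r z = y)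
    (hst : s t = t) (hst' : s t' = t') (hrt : r t = t) (hrt' : r t' = t')
    (hss : ∀ p, s (s p) = p) (hrr : ∀ p, r (r p) = p)
    (hsrs : ∀ p, s (r (s p)) = r (s (r p))) (p : L) : T (S (T p)) = S (T (S p)) := by
  have h1 := h.eq p
  have h2 := congrArg s h1
  have h3 := congrArg r h1
  have h4 := congrArg s h3
  have h5 := h'.eq (T p)
  have h6 := congrArg s h5
  have h7 := h.eq (S (T p))
  have k1 := h'.eq p
  have k2 := congrArg r k1
  have k3 := congrArg s k1
  have k4 := congrArg r k3
  have k5 := h.eq (S p)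
  have k6 := congrArg r k5
  have k7 := h'.eq (T (S p))
  simp only [map_mul, map_add, map_sub, hsx, hsy, hsz, hrx, hry, hrz, hst, hst', hrt, hrt', hss,
    hrr, hsrs] at *
  exact dom_braid h.ne h'.ne hxz h1 h2 h3 h4 h5 h6 h7 k1 k2 k3 k4 k5 k6 k7

end DLsec

section LaurPart
variable {F : Type*} [Field F] {n : ℕ}

theorem lmul (f : Module.End F (Laur F n))
    (hm : ∀ (a b : Fin n →₀ ℤ) (c d : F), f (mono (a + b) (c * d)) = f (mono a c) * f (mono b d))
    (p r : Laur F n) : f (p * r) = f p * f r := by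
  induction p using AddMonoidAlgebra.induction_linear with
  | zero => simp
  | add p1 p2 h1 h2 => rw [add_mul, map_add, h1, h2, map_add, add_mul]
  | single a c =>
    induction r using AddMonoidAlgebra.induction_linear with
    | zero => simp
    | add p1 p2 h1 h2 => rw [mul_add, map_add, h1, h2, map_add, mul_add]
    | single b d => rw [AddMonoidAlgebra.single_mul_single]; exact hm a b c d

/-- A multiplicative linear endomorphism as an algebra map. -/
def lAlg (f : Module.End F (Laur F n)) (h1 : f (mono 0 1) = mono 0 1)
    (hm : ∀ (a b : Fin n →₀ ℤ) (c d : F), f (mono (a + b) (c * d)) = f (mono a c) * f (mono b d)) :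
    Laur F n →ₐ[F] Laur F n :=
  AlgHom.ofLinearMap f (by rw [AddMonoidAlgebra.one_def]; exact h1) (lmul f hm)

theorem mono_mul (a b : Fin n →₀ ℤ) (c d : F) : mono a c * mono b d = mono (a + b) (c * d) :=
  AddMonoidAlgebra.single_mul_single ..

theorem lin_ext (f g : Module.End F (Laur F n)) (h : ∀ a c, f (mono a c) = g (mono a c))
    (p : Laur F n) : f p = g p := by
  induction p using AddMonoidAlgebra.induction_linear with
  | zero => simp
  | add p1 p2 h1 h2 => rw [map_add, h1, h2, map_add]
  | single a c => exact h a c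

theorem emd_add (w : Equiv.Perm (Fin n)) (a b : Fin n →₀ ℤ) :
    Finsupp.equivMapDomain w (a + b) = Finsupp.equivMapDomain w a + Finsupp.equivMapDomain w b := by
  ext; simp [Finsupp.equivMapDomain_apply]

theorem emd_zero (w : Equiv.Perm (Fin n)) :
    Finsupp.equivMapDomain w (0 : Fin n →₀ ℤ) = 0 := by
  ext; simp

theorem Xel_ne {i j : Fin n} (h : i ≠ j) : (Xel i : Laur F n) - Xel j ≠ 0 := by
  intro h0
  have h1 : (Xel i : Laur F n) = Xel j := sub_eq_zero.1 h0
  unfold Xel mono at h1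
  have h2 := (AddMonoidAlgebra.single_left_inj one_ne_zero).1 h1
  exact h ((Finsupp.single_left_inj one_ne_zero).1 h2)

theorem X_Xinv (i : Fin n) : (Xel i : Laur F n) * XinvEl i = 1 := by
  unfold Xel XinvEl
  rw [mono_mul, ← Finsupp.single_add]
  simp [mono, AddMonoidAlgebra.one_def]

section
variable (W : Equiv.Perm (Fin n) → Module.End F (Laur F n))
    (hW : ∀ (w : Equiv.Perm (Fin n)) (a : Fin n →₀ ℤ) (c : F),
      W w (mono a c) = mono (Finsupp.equivMapDomain w a) c)

/-- The permutation action as algebra maps. -/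
def WA (w : Equiv.Perm (Fin n)) : Laur F n →ₐ[F] Laur F n :=
  lAlg (W w) (by rw [hW, emd_zero]) (fun a b c d => by rw [hW, hW, hW, mono_mul, emd_add])

theorem WA_apply (w : Equiv.Perm (Fin n)) (p) : WA W hW w p = W w p := rfl

theorem WA_X (w : Equiv.Perm (Fin n)) (i) : WA W hW w (Xel i) = Xel (w i) := by
  rw [WA_apply, Xel, hW, Finsupp.equivMapDomain_single]; rfl

theorem WA_W (w v : Equiv.Perm (Fin n)) (p) : WA W hW w (WA W hW v p) = WA W hW (w * v) p := by
  refine lin_ext (W w * W v) (W (w * v)) (fun a c => ?_) p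
  rw [Module.End.mul_apply, hW, hW, hW, ← Finsupp.equivMapDomain_trans]; rfl

theorem WA_one (p) : WA W hW 1 p = p := by
  refine lin_ext (W 1) 1 (fun a c => ?_) p
  rw [hW]; congr 1; exact Finsupp.equivMapDomain_refl a

end

section
variable {m : ℕ} (q : F) (hq : q ≠ 0) (piInv : Module.End F (Laur F (m + 1)))
    (hpiInv : ∀ (a : Fin (m + 1) →₀ ℤ) (c : F),
      piInv (mono a c)
        = q ^ (a 0) • mono (Finsupp.equivMapDomain (finRotate (m + 1)).symm a) c)

/-- The operator `π⁻¹` as an algebra map. -/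
def PA : Laur F (m + 1) →ₐ[F] Laur F (m + 1) :=
  lAlg piInv (by rw [hpiInv, emd_zero]; simp) (fun a b c d => by
    rw [hpiInv, hpiInv, hpiInv, smul_mul_smul_comm, mono_mul, emd_add, Finsupp.add_apply,
      zpow_add₀ hq])

theorem PA_apply (p) : PA q hq piInv hpiInv p = piInv p := rfl

theorem PA_X (k : ℕ) (hk : k + 1 < m + 1) : PA q hq piInv hpiInv (Xel ⟨k + 1, hk⟩) =
    Xel ⟨k, Nat.lt_of_succ_lt hk⟩ := by
  rw [PA_apply, Xel, hpiInv, Finsupp.equivMapDomain_single]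
  have : (finRotate (m + 1)).symm ⟨k + 1, hk⟩ = ⟨k, Nat.lt_of_succ_lt hk⟩ := by
    rw [Equiv.symm_apply_eq, finRotate_of_lt (by omega)]
  rw [this, Finsupp.single_eq_of_ne]
  · simp [Xel]
  · intro h; simpa using congrArg Fin.val h

theorem PA_X0 : PA q hq piInv hpiInv (Xel ⟨0, Nat.succ_pos m⟩) =
    algebraMap F _ q * Xel ⟨m, Nat.lt_succ_self m⟩ := by
  rw [PA_apply, Xel, hpiInv, Finsupp.equivMapDomain_single]
  have : (finRotate (m + 1)).symm ⟨0, Nat.succ_pos m⟩ = ⟨m, Nat.lt_succ_self m⟩ := by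
    rw [Equiv.symm_apply_eq, finRotate_last']
  rw [this, ← Algebra.smul_def]
  have : (Finsupp.single (⟨0, Nat.succ_pos m⟩ : Fin (m + 1)) (1:ℤ)) 0 = 1 :=
    Finsupp.single_eq_same
  rw [this, zpow_one]; rfl

variable (W : Equiv.Perm (Fin (m + 1)) → Module.End F (Laur F (m + 1)))
    (hW : ∀ (w : Equiv.Perm (Fin (m + 1))) (a : Fin (m + 1) →₀ ℤ) (c : F),
      W w (mono a c) = mono (Finsupp.equivMapDomain w a) c)

theorem PA_W (k : ℕ) (hk : k + 2 < m + 1) (p) : PA q hq piInv hpiInv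
      (WA W hW (Equiv.swap ⟨k + 1, by omega⟩ ⟨k + 2, hk⟩) p) =
    WA W hW (Equiv.swap ⟨k, by omega⟩ ⟨k + 1, by omega⟩) (PA q hq piInv hpiInv p) := by
  refine lin_ext (piInv * W _) (W _ * piInv) (fun a c => ?_) p
  rw [Module.End.mul_apply, Module.End.mul_apply, hW, hpiInv, hpiInv, map_smul, hW,
    ← Finsupp.equivMapDomain_trans, ← Finsupp.equivMapDomain_trans]
  congr 2
  congr 1
  change (finRotate (m+1))⁻¹ * _ = _ * (finRotate (m+1))⁻¹
  rw [Equiv.mul_swap_eq_swap_mul]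
  congr 2
  · change (finRotate (m + 1)).symm _ = _
    rw [Equiv.symm_apply_eq, finRotate_of_lt (by omega)]
  · change (finRotate (m + 1)).symm _ = _
    rw [Equiv.symm_apply_eq, finRotate_of_lt (by omega)]

theorem PA_PA_W (hm : 0 < m) (p) : PA q hq piInv hpiInv (PA q hq piInv hpiInv
      (WA W hW (Equiv.swap ⟨0, by omega⟩ ⟨1, by omega⟩) p)) =
    WA W hW (Equiv.swap ⟨m - 1, by omega⟩ ⟨m, by omega⟩)
      (PA q hq piInv hpiInv (PA q hq piInv hpiInv p)) := by
  refine lin_ext (piInv * (piInv * W _)) (W _ * (piInv * piInv)) (fun a c => ?_) p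
  have r0 : (finRotate (m + 1)).symm ⟨0, Nat.succ_pos m⟩ = ⟨m, Nat.lt_succ_self m⟩ := by
    rw [Equiv.symm_apply_eq, finRotate_last']
  have r1 : (finRotate (m + 1)).symm ⟨m, Nat.lt_succ_self m⟩ = ⟨m - 1, by omega⟩ := by
    rw [Equiv.symm_apply_eq, finRotate_of_lt (by omega)]
    ext; simp; omega
  have r2 : (finRotate (m + 1)).symm ⟨1, by omega⟩ = ⟨0, by omega⟩ := by
    rw [Equiv.symm_apply_eq, finRotate_of_lt (by omega)]
  have r3 : (finRotate (m + 1)) 0 = ⟨1, by omega⟩ := by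
    rw [Equiv.symm_apply_eq] at r2; exact r2.symm
  simp only [Module.End.mul_apply, hW, hpiInv, map_smul, 
    ← Finsupp.equivMapDomain_trans, smul_smul, ← zpow_add₀ hq]
  congr 2
  · rw [add_comm]
    simp only [Finsupp.equivMapDomain_apply, Equiv.symm_swap, Equiv.symm_symm, Equiv.symm_trans_apply, r3]
    have e0 : (0 : Fin (m+1)) = ⟨0, by omega⟩ := rfl
    rw [e0, Equiv.swap_apply_left, Equiv.swap_apply_right, add_comm]
  · congr 1
    change (finRotate (m+1))⁻¹ * ((finRotate (m+1))⁻¹ * _) = _ * ((finRotate (m+1))⁻¹ * (finRotate (m+1))⁻¹)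
    rw [Equiv.mul_swap_eq_swap_mul, ← mul_assoc, Equiv.mul_swap_eq_swap_mul, mul_assoc]
    congr 1
    change Equiv.swap ((finRotate (m+1)).symm ((finRotate (m+1)).symm _)) ((finRotate (m+1)).symm ((finRotate (m+1)).symm _)) = _
    rw [r0, r1, r2, r0]

end
end LaurPart

section OpPart
variable {F : Type*} [Field F] {m : ℕ}

theorem swap_braid {α : Type*} [DecidableEq α] {x y z : α} (h1 : x ≠ y) (h2 : y ≠ z) (h3 : x ≠ z) :
    Equiv.swap x y * Equiv.swap y z * Equiv.swap x y =
      Equiv.swap y z * Equiv.swap x y * Equiv.swap y z := by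
  rw [Equiv.swap_mul_swap_mul_swap h1 h3, Equiv.swap_comm x y, Equiv.swap_comm y z,
    Equiv.swap_mul_swap_mul_swap h2.symm h3.symm, Equiv.swap_comm]

theorem opDG (q τ : F) (hq : q ≠ 0)
    (W : Equiv.Perm (Fin (m + 1)) → Module.End F (Laur F (m + 1)))
    (hW : ∀ (w : Equiv.Perm (Fin (m + 1))) (a : Fin (m + 1) →₀ ℤ) (c : F),
      W w (mono a c) = mono (Finsupp.equivMapDomain w a) c)
    (T Ti : ℕ → Module.End F (Laur F (m + 1)))
    (hT : ∀ (k : ℕ) (hk : k + 1 < m + 1) (p : Laur F (m + 1)),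
      (Xel ⟨k + 1, hk⟩ - Xel ⟨k, Nat.lt_of_succ_lt hk⟩) * T k p
        = (τ⁻¹ • Xel ⟨k + 1, hk⟩ - τ • Xel ⟨k, Nat.lt_of_succ_lt hk⟩)
            * W (Equiv.swap ⟨k, Nat.lt_of_succ_lt hk⟩ ⟨k + 1, hk⟩) p
          + (τ - τ⁻¹) • (Xel ⟨k + 1, hk⟩ * p))
    (hTi : ∀ k, Ti k = T k + (τ⁻¹ - τ) • (1 : Module.End F (Laur F (m + 1))))
    (hTinv : ∀ k, k + 1 < m + 1 → T k * Ti k = 1 ∧ Ti k * T k = 1)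
    (piInv : Module.End F (Laur F (m + 1)))
    (hpiInv : ∀ (a : Fin (m + 1) →₀ ℤ) (c : F),
      piInv (mono a c)
        = q ^ (a 0) • mono (Finsupp.equivMapDomain (finRotate (m + 1)).symm a) c)
    (Tu Xu : ℕ → (Module.End F (Laur F (m + 1)))ˣ) (P Q : (Module.End F (Laur F (m + 1)))ˣ)
    (hTu : ∀ k, k < m → (Tu k : Module.End F (Laur F (m + 1))) = T k)
    (hXu : ∀ k (h : k < m + 1), (Xu k : Module.End F (Laur F (m + 1))) = mulOp (Xel ⟨k, h⟩))
    (hP : (P : Module.End F (Laur F (m + 1))) = piInv)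
    (hQ : (Q : Module.End F (Laur F (m + 1))) = algebraMap _ _ q) :
    DG m Tu Xu P Q := by
  have hDL : ∀ k (hk : k + 1 < m + 1), DL (algebraMap F (Laur F (m + 1)) τ)
      (algebraMap F (Laur F (m + 1)) τ⁻¹)
      (Xel ⟨k, Nat.lt_of_succ_lt hk⟩) (Xel ⟨k + 1, hk⟩)
      (WA W hW (Equiv.swap ⟨k, Nat.lt_of_succ_lt hk⟩ ⟨k + 1, hk⟩) : Laur F (m + 1) →+* Laur F (m + 1))
      (T k) := by
    intro k hk
    refine ⟨fun p => ?_, Xel_ne (by intro h; simpa using congrArg Fin.val h)⟩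
    have := hT k hk p
    simp only [Algebra.smul_def, map_sub] at this
    exact this
  have hsw : ∀ k (hk : k + 1 < m + 1) l (hl : l < m + 1), l ≠ k → l ≠ k + 1 →
      Equiv.swap (⟨k, Nat.lt_of_succ_lt hk⟩ : Fin (m + 1)) ⟨k + 1, hk⟩ ⟨l, hl⟩ = ⟨l, hl⟩ := by
    intro k hk l hl h1 h2
    apply Equiv.swap_apply_of_ne_of_ne
    · intro h; exact h1 (congrArg Fin.val h)
    · intro h; exact h2 (congrArg Fin.val h)
  have hTX1 : ∀ k (hk : k + 1 < m + 1) p, T k (Xel ⟨k + 1, hk⟩ * p) =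
      Xel ⟨k, Nat.lt_of_succ_lt hk⟩ * T k p +
      (algebraMap F _ τ - algebraMap F _ τ⁻¹) * (Xel ⟨k + 1, hk⟩ * p) := by
    intro k hk p
    refine (hDL k hk).mulY ?_ p
    rw [RingHom.coe_coe, WA_X, Equiv.swap_apply_right]
  refine ⟨?_, ?_, ?_, ?_, ?_, ?_, ?_, ?_, ?_, ?_⟩
  · intro k l hkl hl
    apply Units.ext
    rw [Units.val_mul, Units.val_mul, hTu k (by omega), hTu l (by omega)]
    refine LinearMap.ext fun p => ?_
    rw [Module.End.mul_apply, Module.End.mul_apply]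
    refine (hDL k (by omega)).far (hDL l (by omega)) ?_ ?_ ?_ ?_ ?_ ?_ ?_ ?_ (fun p => ?_) p <;>
      try simp only [RingHom.coe_coe, WA_X, AlgHom.commutes, WA_W]
    · rw [hsw _ _ _ _ (by omega) (by omega)]
    · rw [hsw _ _ _ _ (by omega) (by omega)]
    · rw [hsw _ _ _ _ (by omega) (by omega)]
    · rw [hsw _ _ _ _ (by omega) (by omega)]
    · rw [Equiv.mul_swap_eq_swap_mul, hsw _ _ _ _ (by omega) (by omega),
        hsw _ _ _ _ (by omega) (by omega)]
  · intro k hk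
    apply Units.ext
    simp only [Units.val_mul]
    rw [hTu k (by omega), hTu (k+1) (by omega)]
    refine LinearMap.ext fun p => ?_
    simp only [Module.End.mul_apply]
    refine (hDL k (by omega)).braid (hDL (k + 1) (by omega)) ?_ ?_ ?_ ?_ ?_ ?_ ?_ ?_ ?_ ?_ ?_ (fun p => ?_) (fun p => ?_) (fun p => ?_) p <;>
      try simp only [RingHom.coe_coe, WA_X, AlgHom.commutes, WA_W, Equiv.swap_apply_left, Equiv.swap_apply_right,
        Equiv.swap_mul_self, WA_one]
    · exact Xel_ne (by rw [Ne, Fin.mk.injEq]; omega)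
    · rw [hsw _ _ _ _ (by omega) (by omega)]
    · rw [hsw _ _ _ _ (by omega) (by omega)]
    · congr 2
      rw [← mul_assoc, ← mul_assoc]
      refine swap_braid ?_ ?_ ?_ <;> (rw [Ne, Fin.mk.injEq]; omega)
  · intro k l hk hl
    apply Units.ext
    simp only [Units.val_mul]
    rw [hXu k (by omega), hXu l (by omega)]
    refine LinearMap.ext fun p => ?_
    simp only [Module.End.mul_apply, mulOp, LinearMap.mulLeft_apply]
    ring
  · intro k l hk hl h1 h2
    apply Units.ext
    simp only [Units.val_mul]
    rw [hTu k (by omega), hXu l (by omega)]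
    refine LinearMap.ext fun p => ?_
    simp only [Module.End.mul_apply, mulOp, LinearMap.mulLeft_apply]
    refine (hDL k (by omega)).mulX ?_ p
    rw [RingHom.coe_coe, WA_X, hsw _ _ _ _ h1 h2]
  · intro k hk
    have e1 : Ti k * (mulOp (Xel ⟨k + 1, by omega⟩)) = mulOp (Xel ⟨k, by omega⟩) * T k := by
      refine LinearMap.ext fun p => ?_
      simp only [Module.End.mul_apply, mulOp, LinearMap.mulLeft_apply, hTi, LinearMap.add_apply,
        LinearMap.smul_apply, Module.End.one_apply]
      simp only [Algebra.smul_def, hTX1 k (by omega), map_sub]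
      ring
    apply Units.ext
    simp only [Units.val_mul]
    rw [hTu k (by omega), hXu (k+1) (by omega), hXu k (by omega), mul_assoc, ← e1, ← mul_assoc,
      (hTinv k (by omega)).1, one_mul]
  · intro k hk
    apply Units.ext
    simp only [Units.val_mul]
    rw [hP, hXu k (by omega), hXu (k+1) (by omega)]
    refine LinearMap.ext fun p => ?_
    simp only [Module.End.mul_apply, mulOp, LinearMap.mulLeft_apply]
    simp only [← PA_apply q hq piInv hpiInv, map_mul]
    rw [PA_X]
  · apply Units.ext
    simp only [Units.val_mul]
    rw [hP, hQ, hXu 0 (by omega), hXu m (by omega)]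
    refine LinearMap.ext fun p => ?_
    simp only [Module.End.mul_apply, mulOp, LinearMap.mulLeft_apply]
    simp only [← PA_apply q hq piInv hpiInv, map_mul]
    rw [PA_X0, Module.algebraMap_end_apply, Algebra.smul_def, mul_assoc]
  · intro k hk
    apply Units.ext
    simp only [Units.val_mul]
    rw [hP, hTu k (by omega), hTu (k+1) (by omega)]
    refine LinearMap.ext fun p => ?_
    simp only [Module.End.mul_apply]
    refine (hDL (k + 1) (by omega)).twine (φ := (PA q hq piInv hpiInv : Laur F (m + 1) →+* Laur F (m + 1))) (c := 1)
      (hDL k (by omega)) one_ne_zero ?_ ?_ ?_ ?_ (fun p => ?_) p <;>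
      try simp only [RingHom.coe_coe, AlgHom.commutes, PA_X, one_mul]
    rw [PA_W]
  · intro hm
    apply Units.ext
    simp only [Units.val_mul]
    rw [hP, hTu 0 (by omega), hTu (m-1) (by omega)]
    refine LinearMap.ext fun p => ?_
    simp only [Module.End.mul_apply]
    obtain ⟨r, rfl⟩ : ∃ r, m = r + 1 := ⟨m - 1, by omega⟩
    refine (hDL 0 (by omega)).twine (φ := ((PA q hq piInv hpiInv).comp (PA q hq piInv hpiInv) : Laur F (r + 1 + 1) →+* Laur F (r + 1 + 1))) (c := algebraMap F _ q)
      (hDL r (by omega)) ?_ ?_ ?_ ?_ ?_ (fun p => ?_) p <;>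
      try simp only [RingHom.coe_coe, AlgHom.commutes, AlgHom.comp_apply, PA_X, PA_X0, map_mul]
    · exact (map_ne_zero_iff _ (FaithfulSMul.algebraMap_injective F _)).2 hq
    · exact PA_PA_W q hq piInv hpiInv W hW hm p
  · intro g
    apply Units.ext
    simp only [Units.val_mul]
    rw [hQ]
    exact Algebra.commutes q _

end OpPart

section FinalPart

theorem aF_coe {A : Type*} [Monoid A] {m : ℕ} {T : ℕ → A} {Tu : ℕ → Aˣ}
    (h : ∀ k, k < m → T k = Tu k) (s len e : ℕ) (he : s + len = e) (hm : e ≤ m) :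
    aF T s len = ((Up Tu s e : Aˣ) : A) := by
  subst he
  rw [Up, Nat.add_sub_cancel_left]
  induction len with
  | zero => rw [aF_zero', aF_zero', Units.val_one]
  | succ l ih => rw [aF_add', aF_add', aF_one', aF_one', ih (by omega), h _ (by omega), Units.val_mul]

theorem dF_coe {A : Type*} [Monoid A] {m : ℕ} {T : ℕ → A} {Tu : ℕ → Aˣ}
    (h : ∀ k, k < m → T k = Tu k) (s len e : ℕ) (he : s + len = e) (hm : e ≤ m) :
    dF T s len = ((Dn Tu s e : Aˣ) : A) := by
  subst he
  rw [Dn, Nat.add_sub_cancel_left]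
  induction len with
  | zero => rw [dF_zero', dF_zero', Units.val_one]
  | succ l ih => rw [dF_add', dF_add', dF_one', dF_one', ih (by omega), h _ (by omega), Units.val_mul]

theorem aF_coe_inv {A : Type*} [Monoid A] {m : ℕ} {T : ℕ → A} {Tu : ℕ → Aˣ}
    (h : ∀ k, k < m → T k = ((Tu k)⁻¹ : Aˣ)) (s len e : ℕ) (he : s + len = e) (hm : e ≤ m) :
    aF T s len = (((Dn Tu s e)⁻¹ : Aˣ) : A) := by
  subst he
  rw [Dn, Nat.add_sub_cancel_left]
  induction len with
  | zero => rw [aF_zero', dF_zero', inv_one, Units.val_one]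
  | succ l ih =>
    rw [aF_add', dF_add', aF_one', dF_one', ih (by omega), h _ (by omega), mul_inv_rev, Units.val_mul]

theorem dF_coe_inv {A : Type*} [Monoid A] {m : ℕ} {T : ℕ → A} {Tu : ℕ → Aˣ}
    (h : ∀ k, k < m → T k = ((Tu k)⁻¹ : Aˣ)) (s len e : ℕ) (he : s + len = e) (hm : e ≤ m) :
    dF T s len = (((Up Tu s e)⁻¹ : Aˣ) : A) := by
  subst he
  rw [Up, Nat.add_sub_cancel_left]
  induction len with
  | zero => rw [dF_zero', aF_zero', inv_one, Units.val_one]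
  | succ l ih =>
    rw [aF_add', dF_add', aF_one', dF_one', ih (by omega), h _ (by omega), mul_inv_rev, Units.val_mul]

variable {F A : Type*} [Field F] [Ring A] [Algebra F A]

theorem sq_lem {d : F} {t : Aˣ} (ht : ((t ^ 2 : Aˣ) : A) = 1 + d • (t : A)) (g h : Aˣ) :
    ((g * t ^ 2 * h : Aˣ) : A) = ((g * h : Aˣ) : A) + d • ((g * t * h : Aˣ) : A) := by
  rw [Units.val_mul, Units.val_mul, ht]
  simp only [Units.val_mul, mul_add, add_mul, mul_one, mul_smul_comm, smul_mul_assoc]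

open DG

theorem finalAbs (m : ℕ) (q τ : F) (T Ti X Xi : ℕ → A) (Tu Xu : ℕ → Aˣ) (P Q : Aˣ)
    (H : DG m Tu Xu P Q)
    (hT : ∀ k, k < m → T k = Tu k) (hTi : ∀ k, k < m → Ti k = ((Tu k)⁻¹ : Aˣ))
    (hTTi : ∀ k, k < m → Ti k = T k + (τ⁻¹ - τ) • (1 : A))
    (hX : ∀ k, k ≤ m → X k = Xu k) (hXi : ∀ k, k ≤ m → Xi k = ((Xu k)⁻¹ : Aˣ))
    (hQ : (Q : A) = algebraMap F A q) (hQi : ((Q⁻¹ : Aˣ) : A) = algebraMap F A q⁻¹)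
    (Y Yi D : ℕ → A) (e : ℕ → ℕ → A)
    (hY : ∀ i, Y i = aF T i (m + 1 - 1 - i) * P * aF Ti 0 i)
    (hYinv : ∀ i, i < m + 1 → Y i * Yi i = 1 ∧ Yi i * Y i = 1)
    (hD : ∀ i, D i = aF T i (m + 1 - 1 - i)
        * ((q - q⁻¹)⁻¹ • (Xi (m + 1 - 1) * (Y (m + 1 - 1) - Yi (m + 1 - 1))))
        * dF T i (m + 1 - 1 - i))
    (he : ∀ i j, e i j = X i * D j) :
    (∀ i j : ℕ, i < m + 1 → j < m + 1 → i ≠ j →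
      Y i * e i j * dF Ti 0 i * aF Ti 0 i * Yi i
        = q • (aF T i (m + 1 - 1 - i) * dF T i (m + 1 - 1 - i) * e i j)
          + ((q - q⁻¹)⁻¹ * (τ - τ⁻¹)) •
            (if i < j then
              q • (aF T i (m + 1 - 1 - i) * dF Ti i (j - i - 1) * (Y (m + 1 - 1) - Yi (m + 1 - 1))
                    * dF T j (m + 1 - 1 - j))
             else
              aF T i (m + 1 - 1 - i) * dF Ti 0 j * aF Ti 0 (m + 1 - 2) * Yi (m + 1 - 2)
                * (Y (m + 1 - 1) ^ 2 - 1) * dF T j (m + 1 - 1 - j) * dF Ti i (m + 1 - 1 - i))) ∧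
    (∀ i j : ℕ, i < m + 1 → j < m + 1 → i ≠ j →
      Y i * dF T 0 i * aF T 0 i * e j i * Yi i
        = q⁻¹ • (e j i * aF Ti i (m + 1 - 1 - i) * dF Ti i (m + 1 - 1 - i))
          + ((q - q⁻¹)⁻¹ * (τ⁻¹ - τ)) •
            (if i < j then
              q⁻¹ • (aF Ti j (m + 1 - 1 - j) * (Y (m + 1 - 1) - Yi (m + 1 - 1)) * aF T i (j - i - 1)
                      * dF Ti i (m + 1 - 1 - i))
             else
              aF T i (m + 1 - 1 - i) * aF Ti j (m + 1 - 1 - j) * Y (m + 1 - 2) * (1 - Yi (m + 1 - 1) ^ 2)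
                * dF T 0 (m + 1 - 2) * aF T 0 j * dF Ti i (m + 1 - 1 - i))) ∧
    (∀ i j k : ℕ, i < m + 1 → j < m + 1 → k < m + 1 → i ≠ j → j ≠ k → i ≠ k →
      Y i * Rgen T Ti (T j ^ 2) i j * e j k * Rgen T Ti (Ti k ^ 2) i k * Yi i
        = Rgen Ti T (T i ^ 2) k i * e j k * Rgen Ti T (Ti i ^ 2) j i) := by
  have e1 : ∀ x : A, (Q : A) * x = q • x := fun x => by rw [hQ, Algebra.smul_def]
  have e2 : ∀ x : A, ((Q⁻¹ : Aˣ) : A) * x = q⁻¹ • x := fun x => by rw [hQi, Algebra.smul_def]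
  have Ye : ∀ i, i ≤ m → Y i = (Yg Tu P m i : Aˣ) := by
    intro i hi
    rw [hY, aF_coe hT i (m + 1 - 1 - i) m (by omega) le_rfl,
      aF_coe_inv hTi 0 i i (by omega) hi, Yg, Units.val_mul, Units.val_mul]
  have Yie : ∀ i, i ≤ m → Yi i = ((Yg Tu P m i)⁻¹ : Aˣ) := by
    intro i hi
    have h1 := (hYinv i (by omega)).1
    rw [Ye i hi] at h1
    exact (Units.inv_eq_of_mul_eq_one_right h1).symm
  have sq1 : ∀ k, k < m → ((Tu k ^ 2 : Aˣ) : A) = 1 + (τ - τ⁻¹) • (Tu k : A) := by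
    intro k hk
    have h1 : (Tu k : A) * Ti k = 1 := by rw [hTi k hk, Units.mul_inv]
    rw [hTTi k hk, hT k hk, mul_add, mul_smul_comm, mul_one] at h1
    rw [Units.val_pow_eq_pow_val, pow_two, ← h1]
    module
  have sq2 : ∀ k, k < m → (((Tu k)⁻¹ ^ 2 : Aˣ) : A) = 1 + (τ⁻¹ - τ) • (((Tu k)⁻¹ : Aˣ) : A) := by
    intro k hk
    have h1 : (Tu k : A) * Ti k = 1 := by rw [hTi k hk, Units.mul_inv]
    have h2 : (Tu k : A) = Ti k - (τ⁻¹ - τ) • 1 := by rw [hTTi k hk, hT k hk]; module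
    rw [h2, sub_mul, smul_mul_assoc, one_mul] at h1
    rw [Units.val_pow_eq_pow_val, ← hTi k hk, pow_two, ← h1]
    module
  set c := (q - q⁻¹)⁻¹ with hc
  set y1 := Yg Tu P m m with hy1
  have g1 : Good Tu P m y1 := good1 H
  have g2 : Good Tu P m y1⁻¹ := good2 H
  have ee : ∀ i k, i ≤ m → k ≤ m → e i k = c • (((Xu i * dg Tu Xu m y1 k : Aˣ) : A) -
      ((Xu i * dg Tu Xu m y1⁻¹ k : Aˣ) : A)) := by
    intro i k hi hk
    rw [he, hD, hX i hi, aF_coe hT k (m + 1 - 1 - k) m (by omega) le_rfl,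
      dF_coe hT k (m + 1 - 1 - k) m (by omega) le_rfl, Nat.add_sub_cancel, hXi m le_rfl, Ye m le_rfl,
      Yie m le_rfl]
    simp only [dg, Units.val_mul, mul_sub, sub_mul, mul_smul_comm, smul_mul_assoc, mul_assoc]
    rfl
  refine ⟨?_, ?_, ?_⟩
  · intro i j hi hj hij
    rw [ee i j (by omega) (by omega), Ye i (by omega), Yie i (by omega),
      dF_coe_inv hTi 0 i i (by omega) (by omega), aF_coe_inv hTi 0 i i (by omega) (by omega),
      aF_coe hT i (m + 1 - 1 - i) m (by omega) le_rfl, dF_coe hT i (m + 1 - 1 - i) m (by omega) le_rfl,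
      dF_coe hT j (m + 1 - 1 - j) m (by omega) le_rfl, dF_coe_inv hTi i (m + 1 - 1 - i) m (by omega) le_rfl,
      Nat.add_sub_cancel, Ye m le_rfl, Yie m le_rfl]
    have L : ∀ y : Aˣ, ((Yg Tu P m i : Aˣ) : A) * ((Xu i * dg Tu Xu m y j : Aˣ) : A) *
        (((Up Tu 0 i)⁻¹ : Aˣ) : A) * (((Dn Tu 0 i)⁻¹ : Aˣ) : A) * (((Yg Tu P m i)⁻¹ : Aˣ) : A) =
        ((Yg Tu P m i * (Xu i * dg Tu Xu m y j) * (Jg Tu i)⁻¹ * (Yg Tu P m i)⁻¹ : Aˣ) : A) := by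
      intro y
      rw [Jg, mul_inv_rev]
      simp only [Units.val_mul, mul_assoc]
    rw [mul_smul_comm, smul_mul_assoc, smul_mul_assoc, smul_mul_assoc, mul_sub, sub_mul, sub_mul,
      sub_mul, L, L]
    by_cases hlt : i < j
    · rw [if_pos hlt]
      obtain ⟨r, rfl⟩ : ∃ r, j = r + 1 := ⟨j - 1, by omega⟩
      rw [dF_coe_inv hTi i (r + 1 - i - 1) r (by omega) (by omega)]
      have M : ∀ y, Good Tu P m y → 
          ((Yg Tu P m i * (Xu i * dg Tu Xu m y (r + 1)) * (Jg Tu i)⁻¹ * (Yg Tu P m i)⁻¹ : Aˣ) : A) =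
          q • (((Kg Tu m i * (Xu i * dg Tu Xu m y (r + 1)) : Aˣ) : A) + (τ - τ⁻¹) •
            ((Up Tu i m * (Up Tu i r)⁻¹ * y * Dn Tu (r + 1) m : Aˣ) : A)) := by
        intro y hy
        rw [G1a H hy (by omega) (by omega), Units.val_mul Q, e1, sq_lem (sq1 r (by omega)),
          G1a' H hy (by omega) (by omega)]
        congr 3
        simp only [mul_assoc, mul_inv_cancel_left]
      rw [M _ g1, M _ g2]
      simp only [Kg, Units.val_mul, mul_sub, sub_mul, mul_smul_comm, smul_mul_assoc, mul_assoc]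
      module
    · rw [if_neg hlt]
      rw [show m + 1 - 2 = m - 1 by omega, dF_coe_inv hTi 0 j j (by omega) (by omega),
        aF_coe_inv hTi 0 (m - 1) (m - 1) (by omega) (by omega), Yie (m - 1) (by omega)]
      have M : ∀ y, Good Tu P m y → 
          ((Yg Tu P m i * (Xu i * dg Tu Xu m y j) * (Jg Tu i)⁻¹ * (Yg Tu P m i)⁻¹ : Aˣ) : A) =
          q • ((Kg Tu m i * (Xu i * dg Tu Xu m y j) : Aˣ) : A) + (τ - τ⁻¹) •
            ((Up Tu i m * (Up Tu 0 j)⁻¹ * (Dn Tu 0 (m - 1))⁻¹ * (Yg Tu P m (m - 1))⁻¹ *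
              (Yg Tu P m m * y) * Dn Tu j m * (Up Tu i m)⁻¹ : Aˣ) : A) := by
        intro y hy
        rw [G1b H hy (by omega) (by omega), ← G1b2 H hy (by omega) (by omega), Units.val_mul Q, e1,
          sq_lem (sq1 j (by omega)), G1b1 H hy (by omega) (by omega), Units.val_mul Q, e1]
        module
      rw [M _ g1, M _ g2, ← hy1, mul_inv_cancel]
      simp only [Kg, Units.val_mul, mul_sub, sub_mul, mul_smul_comm, smul_mul_assoc, mul_assoc, pow_two,
        Units.val_one, one_mul]
      module
  · intro i j hi hj hij
    rw [ee j i (by omega) (by omega), Ye i (by omega), Yie i (by omega),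
      dF_coe hT 0 i i (by omega) (by omega), aF_coe hT 0 i i (by omega) (by omega),
      aF_coe hT i (m + 1 - 1 - i) m (by omega) le_rfl, aF_coe_inv hTi i (m + 1 - 1 - i) m (by omega) le_rfl,
      aF_coe_inv hTi j (m + 1 - 1 - j) m (by omega) le_rfl, dF_coe_inv hTi i (m + 1 - 1 - i) m (by omega) le_rfl,
      Nat.add_sub_cancel, Ye m le_rfl, Yie m le_rfl]
    have L : ∀ y : Aˣ, ((Yg Tu P m i : Aˣ) : A) *
        (Dn Tu 0 i : Aˣ) * (Up Tu 0 i : Aˣ) * ((Xu j * dg Tu Xu m y i : Aˣ) : A) *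
        (((Yg Tu P m i)⁻¹ : Aˣ) : A) =
        ((Yg Tu P m i * Jg Tu i * (Xu j * dg Tu Xu m y i) * (Yg Tu P m i)⁻¹ : Aˣ) : A) := by
      intro y
      rw [Jg]
      simp only [Units.val_mul, mul_assoc]
    rw [mul_smul_comm, smul_mul_assoc, smul_mul_assoc, smul_mul_assoc, mul_sub, sub_mul, sub_mul,
      sub_mul, L, L]
    have KK : ((Kg Tu m i)⁻¹ : Aˣ) = (Dn Tu i m)⁻¹ * (Up Tu i m)⁻¹ := by rw [Kg, mul_inv_rev]
    by_cases hlt : i < j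
    · rw [if_pos hlt]
      obtain ⟨r, rfl⟩ : ∃ r, j = r + 1 := ⟨j - 1, by omega⟩
      rw [aF_coe hT i (r + 1 - i - 1) r (by omega) (by omega)]
      have M : ∀ y, Good Tu P m y → 
          ((Yg Tu P m i * Jg Tu i * (Xu (r + 1) * dg Tu Xu m y i) * (Yg Tu P m i)⁻¹ : Aˣ) : A) =
          q⁻¹ • (((Xu (r + 1) * dg Tu Xu m y i * (Kg Tu m i)⁻¹ : Aˣ) : A) + (τ⁻¹ - τ) •
            (((Dn Tu (r + 1) m)⁻¹ * y * Up Tu i r * (Up Tu i m)⁻¹ : Aˣ) : A)) := by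
        intro y hy
        rw [G2a H hy (by omega) (by omega), Units.val_mul Q⁻¹, e2, sq_lem (sq2 r (by omega)),
          G2a' H hy (by omega) (by omega)]
        congr 3
        simp only [mul_assoc, mul_inv_cancel_left]
      rw [M _ g1, M _ g2, KK]
      simp only [Units.val_mul, mul_sub, sub_mul, mul_smul_comm, smul_mul_assoc, mul_assoc]
      module
    · rw [if_neg hlt]
      rw [show m + 1 - 2 = m - 1 by omega, aF_coe hT 0 j j (by omega) (by omega),
        dF_coe hT 0 (m - 1) (m - 1) (by omega) (by omega), Ye (m - 1) (by omega)]
      have M : ∀ y, Good Tu P m y → 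
          ((Yg Tu P m i * Jg Tu i * (Xu j * dg Tu Xu m y i) * (Yg Tu P m i)⁻¹ : Aˣ) : A) =
          q⁻¹ • ((Xu j * dg Tu Xu m y i * (Kg Tu m i)⁻¹ : Aˣ) : A) + (τ⁻¹ - τ) •
            ((Up Tu i m * (Dn Tu j m)⁻¹ * Yg Tu P m (m - 1) * ((Yg Tu P m m)⁻¹ * y) *
              Dn Tu 0 (m - 1) * Up Tu 0 j * (Up Tu i m)⁻¹ : Aˣ) : A) := by
        intro y hy
        rw [G2b H hy (by omega) (by omega), ← G2b' H hy (by omega) (by omega), Units.val_mul Q⁻¹, e2,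
          sq_lem (sq2 j (by omega)), Units.val_mul Q⁻¹, e2, smul_add, smul_comm (τ⁻¹ - τ)]
        congr 3
        simp only [mul_assoc, mul_inv_cancel_left]
      rw [M _ g1, M _ g2, ← hy1, inv_mul_cancel, KK]
      simp only [Units.val_mul, mul_sub, sub_mul, mul_smul_comm, smul_mul_assoc, mul_assoc, pow_two,
        Units.val_one, one_mul]
      module
  · intro i j k hi hj hk hij hjk hik
    have R1 : Rgen T Ti (T j ^ 2) i j = ((if j < i then Rg Tu i j else 1 : Aˣ) : A) := by
      unfold Rgen
      split_ifs with h
      · rw [dF_coe hT (j + 1) (i - j - 1) i (by omega) (by omega),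
          aF_coe_inv hTi (j + 1) (i - j - 1) i (by omega) (by omega), hT j (by omega), Rg]
        simp only [Units.val_mul, Units.val_pow_eq_pow_val]
      · rfl
    have R2 : Rgen T Ti (Ti k ^ 2) i k = ((if k < i then (Rg Tu i k)⁻¹ else 1 : Aˣ) : A) := by
      unfold Rgen
      split_ifs with h
      · rw [dF_coe hT (k + 1) (i - k - 1) i (by omega) (by omega),
          aF_coe_inv hTi (k + 1) (i - k - 1) i (by omega) (by omega), hTi k (by omega), Rg]
        simp only [← Units.val_mul, ← Units.val_pow_eq_pow_val]
        congr 1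
        group
      · rfl
    have R3 : Rgen Ti T (T i ^ 2) k i = ((if i < k then Ag Tu i k else 1 : Aˣ) : A) := by
      unfold Rgen
      split_ifs with h
      · rw [dF_coe_inv hTi (i + 1) (k - i - 1) k (by omega) (by omega),
          aF_coe hT (i + 1) (k - i - 1) k (by omega) (by omega), hT i (by omega), Ag]
        simp only [Units.val_mul, Units.val_pow_eq_pow_val]
      · rfl
    have R4 : Rgen Ti T (Ti i ^ 2) j i = ((if i < j then (Ag Tu i j)⁻¹ else 1 : Aˣ) : A) := by
      unfold Rgen
      split_ifs with h
      · rw [dF_coe_inv hTi (i + 1) (j - i - 1) j (by omega) (by omega),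
          aF_coe hT (i + 1) (j - i - 1) j (by omega) (by omega), hTi i (by omega), Ag]
        simp only [← Units.val_mul, ← Units.val_pow_eq_pow_val]
        congr 1
        group
      · rfl
    rw [R1, R2, R3, R4, ee j k (by omega) (by omega), Ye i (by omega), Yie i (by omega)]
    simp only [mul_smul_comm, smul_mul_assoc, mul_sub, sub_mul, ← Units.val_mul]
    rw [G3 H g1 (by omega) (by omega) (by omega) hij hjk hik,
      G3 H g2 (by omega) (by omega) (by omega) hij hjk hik]

end FinalPart

/-- Relations for moving `Y_i` through the elements `e_{jk}`
(indices `0`-based; the two cases for `C₁`, `C₂` are encoded by an `if`). -/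
theorem statement10
    (F : Type*) [Field F] (n : ℕ) [NeZero n]
    (q τ : F) (hq : q ≠ 0) (hqroot : ∀ m : ℕ, m ≠ 0 → q ^ m ≠ 1) (hτ : τ ≠ 0)
    -- the action of the symmetric group permuting the variables
    (W : Equiv.Perm (Fin n) → Module.End F (Laur F n))
    (hW : ∀ (w : Equiv.Perm (Fin n)) (a : Fin n →₀ ℤ) (c : F),
      W w (mono a c) = mono (Finsupp.equivMapDomain w a) c)
    -- the Demazure–Lusztig operators `T_k` and their inverses `Ti k = T k + τ⁻¹ - τ`
    (T Ti : ℕ → Module.End F (Laur F n))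
    (hT : ∀ (k : ℕ) (hk : k + 1 < n) (p : Laur F n),
      (Xel ⟨k + 1, hk⟩ - Xel ⟨k, Nat.lt_of_succ_lt hk⟩) * T k p
        = (τ⁻¹ • Xel ⟨k + 1, hk⟩ - τ • Xel ⟨k, Nat.lt_of_succ_lt hk⟩)
            * W (Equiv.swap ⟨k, Nat.lt_of_succ_lt hk⟩ ⟨k + 1, hk⟩) p
          + (τ - τ⁻¹) • (Xel ⟨k + 1, hk⟩ * p))
    (hTi : ∀ k, Ti k = T k + (τ⁻¹ - τ) • (1 : Module.End F (Laur F n)))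
    (hTinv : ∀ k, k + 1 < n → T k * Ti k = 1 ∧ Ti k * T k = 1)
    -- the operator `π⁻¹`
    (piInv : Module.End F (Laur F n))
    (hpiInv : ∀ (a : Fin n →₀ ℤ) (c : F),
      piInv (mono a c)
        = q ^ (a 0) • mono (Finsupp.equivMapDomain (finRotate n).symm a) c)
    -- the operators `Y_i = T_i ⋯ T_{n-1} ⬝ π⁻¹ ⬝ T_1⁻¹ ⋯ T_{i-1}⁻¹` and their inverses
    (Y Yi : ℕ → Module.End F (Laur F n))
    (hY : ∀ i, Y i = aF T i (n - 1 - i) * piInv * aF Ti 0 i)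
    (hYinv : ∀ i, i < n → Y i * Yi i = 1 ∧ Yi i * Y i = 1)
    -- the `q`-Dunkl-type operators `D_i`
    (D : ℕ → Module.End F (Laur F n))
    (hD : ∀ i, D i = aF T i (n - 1 - i)
        * ((q - q⁻¹)⁻¹ • (XinvOp (n - 1) * (Y (n - 1) - Yi (n - 1))))
        * dF T i (n - 1 - i))
    -- the operators `e_{ij} = X_i · D_j`
    (e : ℕ → ℕ → Module.End F (Laur F n))
    (he : ∀ i j, e i j = XOp i * D j)
    :
    (∀ i j : ℕ, i < n → j < n → i ≠ j →
      Y i * e i j * dF Ti 0 i * aF Ti 0 i * Yi i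
        = q • (aF T i (n - 1 - i) * dF T i (n - 1 - i) * e i j)
          + ((q - q⁻¹)⁻¹ * (τ - τ⁻¹)) •
            (if i < j then
              q • (aF T i (n - 1 - i) * dF Ti i (j - i - 1) * (Y (n - 1) - Yi (n - 1))
                    * dF T j (n - 1 - j))
             else
              aF T i (n - 1 - i) * dF Ti 0 j * aF Ti 0 (n - 2) * Yi (n - 2)
                * (Y (n - 1) ^ 2 - 1) * dF T j (n - 1 - j) * dF Ti i (n - 1 - i))) ∧
    (∀ i j : ℕ, i < n → j < n → i ≠ j →
      Y i * dF T 0 i * aF T 0 i * e j i * Yi i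
        = q⁻¹ • (e j i * aF Ti i (n - 1 - i) * dF Ti i (n - 1 - i))
          + ((q - q⁻¹)⁻¹ * (τ⁻¹ - τ)) •
            (if i < j then
              q⁻¹ • (aF Ti j (n - 1 - j) * (Y (n - 1) - Yi (n - 1)) * aF T i (j - i - 1)
                      * dF Ti i (n - 1 - i))
             else
              aF T i (n - 1 - i) * aF Ti j (n - 1 - j) * Y (n - 2) * (1 - Yi (n - 1) ^ 2)
                * dF T 0 (n - 2) * aF T 0 j * dF Ti i (n - 1 - i))) ∧
    (∀ i j k : ℕ, i < n → j < n → k < n → i ≠ j → j ≠ k → i ≠ k →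
      Y i * Rgen T Ti (T j ^ 2) i j * e j k * Rgen T Ti (Ti k ^ 2) i k * Yi i
        = Rgen Ti T (T i ^ 2) k i * e j k * Rgen Ti T (Ti i ^ 2) j i) := by
  obtain ⟨m, rfl⟩ : ∃ m, n = m + 1 := ⟨n - 1, by have := NeZero.ne n; omega⟩
  let Tu : ℕ → (Module.End F (Laur F (m + 1)))ˣ := fun k =>
    if h : k + 1 < m + 1 then ⟨T k, Ti k, (hTinv k h).1, (hTinv k h).2⟩ else 1
  let Xu : ℕ → (Module.End F (Laur F (m + 1)))ˣ := fun k =>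
    if h : k < m + 1 then ⟨mulOp (Xel ⟨k, h⟩), mulOp (XinvEl ⟨k, h⟩),
      by
        refine LinearMap.ext fun p => ?_
        simp only [Module.End.mul_apply, mulOp, LinearMap.mulLeft_apply, Module.End.one_apply]
        rw [← mul_assoc, X_Xinv, one_mul],
      by
        refine LinearMap.ext fun p => ?_
        simp only [Module.End.mul_apply, mulOp, LinearMap.mulLeft_apply, Module.End.one_apply]
        rw [← mul_assoc, mul_comm (XinvEl _), X_Xinv, one_mul]⟩ else 1
  have hTu : ∀ k, k < m → T k = Tu k := fun k hk => by
    simp only [Tu]; rw [dif_pos (by omega)]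
  have hTui : ∀ k, k < m → Ti k = ((Tu k)⁻¹ : (Module.End F (Laur F (m + 1)))ˣ) := fun k hk => by
    simp only [Tu]; rw [dif_pos (by omega)]; rfl
  have hXu : ∀ k (h : k < m + 1), (Xu k : Module.End F (Laur F (m + 1))) = mulOp (Xel ⟨k, h⟩) :=
    fun k hk => by simp only [Xu]; rw [dif_pos hk]
  have hXui : ∀ k (h : k < m + 1), (((Xu k)⁻¹ : (Module.End F (Laur F (m + 1)))ˣ) :
      Module.End F (Laur F (m + 1))) = mulOp (XinvEl ⟨k, h⟩) :=
    fun k hk => by simp only [Xu]; rw [dif_pos hk]; rfl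
  have hPu : IsUnit piInv := by
    have h0 := hY 0
    rw [aF_coe hTu 0 (m + 1 - 1 - 0) m (by omega) le_rfl, aF_zero', mul_one] at h0
    have h1 : IsUnit (Y 0) := ⟨⟨Y 0, Yi 0, (hYinv 0 (by omega)).1, (hYinv 0 (by omega)).2⟩, rfl⟩
    rw [h0] at h1
    exact (Units.isUnit_units_mul _ _).1 h1
  obtain ⟨P, hP⟩ := hPu
  let Q : (Module.End F (Laur F (m + 1)))ˣ :=
    Units.map (algebraMap F (Module.End F (Laur F (m + 1)))).toMonoidHom (Units.mk0 q hq)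
  have hQ : (Q : Module.End F (Laur F (m + 1))) = algebraMap _ _ q := rfl
  have hQi : ((Q⁻¹ : (Module.End F (Laur F (m + 1)))ˣ) : Module.End F (Laur F (m + 1))) =
      algebraMap _ _ q⁻¹ := rfl
  have H : DG m Tu Xu P Q := opDG q τ hq W hW T Ti hT hTi hTinv piInv hpiInv Tu Xu P Q
    (fun k hk => (hTu k hk).symm) hXu hP hQ
  refine finalAbs m q τ T Ti XOp XinvOp Tu Xu P Q H hTu hTui (fun k _ => hTi k) ?_ ?_ hQ hQi
    Y Yi D e ?_ hYinv hD he
  · intro k hk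
    rw [hXu k (by omega), XOp, dif_pos]
  · intro k hk
    rw [hXui k (by omega), XinvOp, dif_pos]
  · rw [hP]; exact hY
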